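/- arXiv:2505.24271 — 2 statements merged into one kernel-verified Lean document; each statement's English description precedes it below -/
import Mathlib

section
/- For every ε > 0 there exists C_ε > 0 with the following property. For all dyadic N, N₁, N₂, N₃ ≥ 1, all m ∈ ℤ, and every fixed n₂ ∈ ℤ², the number of triples (n, n₁, n₃) with (n, n₁, n₂, n₃) ∈ S^{𝐍,(m)} is at most C_ε · min( N² (min(N₁, N₃))^ε, (N N₁)^{1+ε}, (N N₃)^{1+ε}, (N₁ N₃)^{1+ε} ), uniformly in n₂ and m. -/
/-- Euclidean norm of a lattice point in `ℤ²`. -/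
noncomputable def znorm (n : ℤ × ℤ) : ℝ := Real.sqrt ((n.1 : ℝ) ^ 2 + (n.2 : ℝ) ^ 2)

/-- Squared Euclidean norm `|n|²` of `n ∈ ℤ²`, as an integer. -/
def nsq (n : ℤ × ℤ) : ℤ := n.1 ^ 2 + n.2 ^ 2

/-- `φ(n̄) = |n|² − |n₁|² + |n₂|² − |n₃|²`. -/
def phiFn (n n₁ n₂ n₃ : ℤ × ℤ) : ℤ := nsq n - nsq n₁ + nsq n₂ - nsq n₃

/-- `N` is a dyadic number: `N = 2^k` for some integer `k ≥ 0`. -/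
def IsDyadic (N : ℝ) : Prop := ∃ k : ℕ, N = 2 ^ k

/-- `|n| ∼ N`: for dyadic `N ≥ 2` this means `N/2 < |n| ≤ N`; for `N = 1` it means `|n| ≤ 1`. -/
def simDyadic (N : ℝ) (n : ℤ × ℤ) : Prop :=
  (N = 1 ∧ znorm n ≤ 1) ∨ (N ≠ 1 ∧ N / 2 < znorm n ∧ znorm n ≤ N)

/-- Membership in the set `S^{𝐍,(m)}`. -/
def SMem (N N₁ N₂ N₃ : ℝ) (m : ℤ) (n n₁ n₂ n₃ : ℤ × ℤ) : Prop :=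
  n = n₁ - n₂ + n₃ ∧ n ≠ n₁ ∧ n ≠ n₃ ∧ phiFn n n₁ n₂ n₃ = m ∧
    simDyadic N n ∧ simDyadic N₁ n₁ ∧ simDyadic N₂ n₂ ∧ simDyadic N₃ n₃ 

open Finset

lemma gi_divs (p : ℕ) (hp : p.Prime) (e : ℕ) : ∃ D : Finset GaussianInt, D.card ≤ e + 1 ∧
    ∀ (z : GaussianInt) (K : ℕ), ¬ p ∣ K → z.norm = ((p ^ e * K : ℕ) : ℤ) →
      ∃ d ∈ D, ∃ w, z = d * w ∧ w.norm = (K : ℤ) := by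
  have : Fact p.Prime := ⟨hp⟩
  have hp0 : (p : ℤ) ≠ 0 := by exact_mod_cast hp.ne_zero
  by_cases h3 : p % 4 = 3
  · have hP : Prime (p : GaussianInt) := GaussianInt.prime_of_nat_prime_of_mod_four_eq_three p h3
    refine ⟨{(p : GaussianInt) ^ (e / 2)}, by simp, ?_⟩
    intro z K hK
    simp only [mem_singleton, exists_eq_left]
    have step : ∀ (z : GaussianInt) (M : ℤ), z.norm = p * M → ∃ z', z = p * z' ∧ M = p * z'.norm := by
      intro z M h
      have h1 : (p : GaussianInt) ∣ z * star z := by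
        rw [← Zsqrtd.norm_eq_mul_conj, h]
        exact ⟨(M : GaussianInt), by push_cast; rfl⟩
      have h2 : (p : GaussianInt) ∣ z := by
        rcases hP.dvd_or_dvd h1 with h | h
        · exact h
        · obtain ⟨c, hc⟩ := h
          refine ⟨star c, ?_⟩
          have := congrArg star hc
          simpa [mul_comm] using this
      obtain ⟨z', rfl⟩ := h2
      refine ⟨z', rfl, ?_⟩
      rw [Zsqrtd.norm_mul, Zsqrtd.norm_natCast, mul_assoc] at h
      exact (mul_left_cancel₀ hp0 h).symm
    induction e using Nat.twoStepInduction generalizing z with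
    | zero => intro h; exact ⟨z, by simp, by simpa using h⟩
    | one =>
      intro h
      obtain ⟨z', -, h2⟩ := step z K (by rw [h]; push_cast; ring)
      exact absurd (Int.natCast_dvd_natCast.mp ⟨_, h2⟩) hK
    | more e ih _ =>
      intro h
      obtain ⟨z', rfl, h2⟩ := step z (p ^ (e + 1) * K) (by rw [h]; push_cast; ring)
      have h4 : z'.norm = ((p ^ e * K : ℕ) : ℤ) := by
        apply mul_left_cancel₀ hp0
        rw [← h2]; push_cast; ring
      obtain ⟨w, hw, hn⟩ := ih z' h4
      refine ⟨w, ?_, hn⟩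
      rw [show (e + 2) / 2 = e / 2 + 1 by omega, pow_succ, hw]
      ring
  · obtain ⟨a, b, hab⟩ := Nat.Prime.sq_add_sq (p := p) h3
    set π : GaussianInt := ⟨a, b⟩ with hπ
    have hn : π.norm = p := by
      rw [Zsqrtd.norm_def, ← hab]; push_cast; simp [hπ]; ring
    have hns : (star π).norm = p := by rw [Zsqrtd.norm_conj, hn]
    have hpm : (p : GaussianInt) = π * star π := by
      rw [← Zsqrtd.norm_eq_mul_conj, hn]; push_cast; rfl
    have hP : Prime π := by
      rw [← irreducible_iff_prime]
      constructor
      · rw [← Zsqrtd.norm_eq_one_iff, hn]; simpa using hp.ne_one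
      · intro x y hxy
        have := congrArg (fun t => (Zsqrtd.norm t).natAbs) hxy
        simp only [Zsqrtd.norm_mul, hn, Int.natAbs_mul, Int.natAbs_natCast] at this
        rcases (Nat.irreducible_iff_nat_prime p).mpr hp |>.isUnit_or_isUnit this with h | h
        · left; exact Zsqrtd.norm_eq_one_iff.mp (Nat.isUnit_iff.mp h)
        · right; exact Zsqrtd.norm_eq_one_iff.mp (Nat.isUnit_iff.mp h)
    have step : ∀ (z : GaussianInt) (M : ℤ), z.norm = p * M →
        ∃ z', (z = π * z' ∨ z = star π * z') ∧ z'.norm = M := by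
      intro z M h
      have h1 : π ∣ z * star z := by
        rw [← Zsqrtd.norm_eq_mul_conj, h]
        exact ⟨star π * (M : GaussianInt), by push_cast; rw [← mul_assoc, ← hpm]⟩
      rcases hP.dvd_or_dvd h1 with ⟨c, hc⟩ | ⟨c, hc⟩
      · refine ⟨c, Or.inl hc, ?_⟩
        rw [hc, Zsqrtd.norm_mul, hn] at h
        exact mul_left_cancel₀ hp0 h
      · have h5 : z = star π * star c := by
          have := congrArg star hc
          simpa [mul_comm] using this
        refine ⟨star c, Or.inr h5, ?_⟩
        rw [h5, Zsqrtd.norm_mul, hns] at h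
        exact mul_left_cancel₀ hp0 h
    refine ⟨(range (e + 1)).image (fun j => π ^ j * (star π) ^ (e - j)),
      card_image_le.trans (by simp), ?_⟩
    intro z K hK
    simp only [mem_image, mem_range, exists_exists_and_eq_and]
    clear hK
    induction e generalizing z with
    | zero => intro h; exact ⟨0, by simp, z, by simp, by simpa using h⟩
    | succ e ih =>
      intro h
      obtain ⟨z', h1, h2⟩ := step z (p ^ e * K) (by rw [h]; push_cast; ring)
      obtain ⟨j, hj, w, hw, hwn⟩ := ih z' (by rw [h2]; push_cast; rfl)
      rcases h1 with h1 | h1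
      · refine ⟨j + 1, by omega, w, ?_, hwn⟩
        rw [h1, hw, show e + 1 - (j + 1) = e - j by omega]; ring
      · refine ⟨j, by omega, w, ?_, hwn⟩
        rw [h1, hw, show e + 1 - j = e - j + 1 by omega]; ring

lemma gi_unit_card (T : Finset GaussianInt) (hT : ∀ z ∈ T, z.norm = 1) : T.card ≤ 9 := by
  have : T ⊆ ((Icc (-1 : ℤ) 1) ×ˢ (Icc (-1 : ℤ) 1)).image (fun q => (⟨q.1, q.2⟩ : GaussianInt)) := by
    intro z hz
    have h := hT z hz
    rw [Zsqrtd.norm_def] at h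
    simp only [mem_image, mem_product, mem_Icc]
    refine ⟨(z.re, z.im), ⟨⟨?_, ?_⟩, ?_, ?_⟩, rfl⟩ <;> simp <;> nlinarith [mul_self_nonneg z.re, mul_self_nonneg z.im]
  exact (card_le_card this).trans (card_image_le.trans (by simp))

lemma gi_card (K : ℕ) : 0 < K → ∀ (T : Finset GaussianInt), (∀ z ∈ T, z.norm = (K : ℤ)) →
    T.card ≤ 9 * K.divisors.card := by
  classical
  induction K using Nat.recOnPrimePow with
  | zero => intro h; omega
  | one => intro _ T hT; simpa using gi_unit_card T (by simpa using hT)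
  | prime_pow_mul a p n hp hpa hn ih =>
    intro hpos T hT
    have ha : 0 < a := Nat.pos_of_ne_zero (by rintro rfl; simp at hpa)
    obtain ⟨D, hD, hDz⟩ := gi_divs p hp n
    have hcop : Nat.Coprime (p ^ n) a := (hp.coprime_iff_not_dvd.mpr hpa).pow_left n
    rw [hcop.card_divisors_mul, Nat.divisors_prime_pow hp, card_map, card_range]
    have key : ∀ z ∈ T, ∃ d ∈ D, ∃ w, z = d * w ∧ w.norm = (a : ℤ) := fun z hz =>
      hDz z a hpa (hT z hz)
    choose! f hf w hw hwn using key
    have := card_le_mul_card_image_of_maps_to (f := f) (s := T) (t := D) hf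
      (9 * a.divisors.card) (by
        intro b hb
        have hinj : Set.InjOn w (T.filter (fun x => f x = b) : Finset GaussianInt) := by
          intro x hx y hy hxy
          simp only [coe_filter, Set.mem_ofPred_eq] at hx hy
          rw [hw x hx.1, hw y hy.1, hx.2, hy.2, hxy]
        rw [← card_image_of_injOn hinj]
        apply ih ha
        intro z hz
        simp only [mem_image, mem_filter] at hz
        obtain ⟨x, hx, rfl⟩ := hz
        exact hwn x hx.1)
    calc T.card ≤ _ := this
      _ ≤ 9 * a.divisors.card * (n + 1) := by gcongr
      _ = _ := by ring

lemma divisor_bound (δ : ℝ) (hδ : 0 < δ) : ∃ C : ℝ, 1 ≤ C ∧ ∀ K : ℕ, 0 < K →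
    (K.divisors.card : ℝ) ≤ C * (K : ℝ) ^ δ := by
  have h2 : (0:ℝ) < Real.log 2 := Real.log_pos (by norm_num)
  set C0 : ℝ := 1 + 1 / (δ * Real.log 2) with hC0
  have hC01 : 1 ≤ C0 := by rw [hC0]; have : 0 < 1 / (δ * Real.log 2) := by positivity
                           linarith
  obtain ⟨P, hP⟩ := exists_nat_gt ((2:ℝ) ^ (1 / δ))
  refine ⟨C0 ^ P, one_le_pow₀ hC01, ?_⟩
  intro K hK
  rw [Nat.card_divisors hK.ne']
  have hfac : (K : ℝ) ^ δ = ∏ p ∈ K.primeFactors, ((p : ℝ) ^ (K.factorization p)) ^ δ := by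
    rw [Real.finsetProd_rpow _ _ (fun i _ => by positivity)]
    congr 1
    conv_lhs => rw [← Nat.prod_factorization_pow_eq_self hK.ne']
    rw [Finsupp.prod]
    push_cast
    rfl
  have hterm : ∀ p ∈ K.primeFactors, ((K.factorization p + 1 : ℕ) : ℝ) ≤
      (if p < P then C0 else 1) * ((p : ℝ) ^ (K.factorization p)) ^ δ := by
    intro p hp
    have hpp := Nat.prime_of_mem_primeFactors hp
    set e := K.factorization p
    have hp2 : (2:ℝ) ≤ p := by exact_mod_cast hpp.two_le
    split_ifs with h
    · have h1 : ((2:ℝ) ^ e) ^ δ ≤ ((p : ℝ) ^ e) ^ δ := by gcongr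
      have h3 : 1 + e * (δ * Real.log 2) ≤ ((2:ℝ) ^ e) ^ δ := by
        rw [Real.rpow_def_of_pos (by positivity), Real.log_pow]
        have := Real.add_one_le_exp (e * Real.log 2 * δ)
        linarith
      have h4 : (e : ℝ) + 1 ≤ C0 * (1 + e * (δ * Real.log 2)) := by
        rw [hC0]
        have : 0 < δ * Real.log 2 := by positivity
        have h5 : (1 + 1 / (δ * Real.log 2)) * (1 + e * (δ * Real.log 2))
          = 1 + e + e * (δ * Real.log 2) + 1 / (δ * Real.log 2) := by field_simp; ring
        rw [h5]
        have : 0 < 1 / (δ * Real.log 2) := by positivity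
        have : 0 ≤ e * (δ * Real.log 2) := by positivity
        linarith
      push_cast
      calc (e : ℝ) + 1 ≤ C0 * (1 + e * (δ * Real.log 2)) := h4
        _ ≤ C0 * ((p : ℝ) ^ e) ^ δ := by gcongr; linarith
    · push Not at h
      have h1 : (2:ℝ) ≤ (p:ℝ) ^ δ := by
        have : (2:ℝ) ^ (1/δ) ≤ p := hP.le.trans (by exact_mod_cast h)
        calc (2:ℝ) = ((2:ℝ) ^ (1/δ)) ^ δ := by
              rw [← Real.rpow_mul (by norm_num)]; field_simp; simp
          _ ≤ _ := by gcongr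
      have h3 : ((p:ℝ) ^ e) ^ δ = ((p:ℝ) ^ δ) ^ e := by
        rw [← Real.rpow_natCast, ← Real.rpow_natCast, ← Real.rpow_mul (by positivity),
          ← Real.rpow_mul (by positivity), mul_comm]
      rw [one_mul, h3]
      calc ((e + 1 : ℕ) : ℝ) ≤ (2:ℝ) ^ e := by exact_mod_cast Nat.lt_two_pow_self
        _ ≤ _ := by gcongr
  push_cast
  calc ∏ p ∈ K.primeFactors, ((K.factorization p : ℝ) + 1)
      ≤ ∏ p ∈ K.primeFactors, ((if p < P then C0 else 1) * ((p : ℝ) ^ (K.factorization p)) ^ δ) :=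
        prod_le_prod (fun _ _ => by positivity) (fun p hp => by simpa using hterm p hp)
    _ = (∏ p ∈ K.primeFactors, (if p < P then C0 else 1)) * (K : ℝ) ^ δ := by
        rw [prod_mul_distrib, hfac]
    _ ≤ C0 ^ P * (K : ℝ) ^ δ := by
        gcongr
        rw [prod_ite, prod_const, prod_const_one, mul_one]
        apply pow_le_pow_right₀ hC01
        calc _ ≤ (range P).card := card_le_card (fun x hx => by
              simp only [mem_filter] at hx; simpa using hx.2)
          _ = P := card_range P

lemma three_circle (K p1 p2 q1 q2 r1 r2 : ℤ) (hp : p1 ^ 2 + p2 ^ 2 = K) (hq : q1 ^ 2 + q2 ^ 2 = K)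
    (hr : r1 ^ 2 + r2 ^ 2 = K) :
    4 * K * ((q1 - p1) * (r2 - p2) - (q2 - p2) * (r1 - p1)) ^ 2 =
      ((q1 - p1) ^ 2 + (q2 - p2) ^ 2) * ((r1 - p1) ^ 2 + (r2 - p2) ^ 2) *
        ((q1 - r1) ^ 2 + (q2 - r2) ^ 2) := by
  -- reduce with differences
  obtain ⟨a, rfl⟩ : ∃ a, q1 = p1 + a := ⟨q1 - p1, by ring⟩
  obtain ⟨b, rfl⟩ : ∃ b, q2 = p2 + b := ⟨q2 - p2, by ring⟩
  obtain ⟨c, rfl⟩ : ∃ c, r1 = p1 + c := ⟨r1 - p1, by ring⟩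
  obtain ⟨d, rfl⟩ : ∃ d, r2 = p2 + d := ⟨r2 - p2, by ring⟩
  have h1 : a ^ 2 + b ^ 2 = -2 * (p1 * a + p2 * b) := by linarith
  have h2 : c ^ 2 + d ^ 2 = -2 * (p1 * c + p2 * d) := by linarith
  have e1 : 2 * p1 * (a * d - b * c) = (c ^ 2 + d ^ 2) * b - (a ^ 2 + b ^ 2) * d := by
    rw [h1, h2]; ring
  have e2 : 2 * p2 * (a * d - b * c) = (a ^ 2 + b ^ 2) * c - (c ^ 2 + d ^ 2) * a := by
    rw [h1, h2]; ring
  have e3 : 4 * K * (a * d - b * c) ^ 2 = (2 * p1 * (a * d - b * c)) ^ 2 +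
      (2 * p2 * (a * d - b * c)) ^ 2 := by rw [← hp]; ring
  rw [e1, e2] at e3
  linear_combination e3

lemma sq_sub_bound (M x y c : ℤ) (hx : |x| ≤ M) (hy : |y| ≤ M) :
    ((2 * x - c) - (2 * y - c)) ^ 2 ≤ 16 * M ^ 2 := by
  have h : |(2 * x - c) - (2 * y - c)| ≤ 4 * M := by
    rw [abs_le] at *; constructor <;> linarith
  nlinarith [sq_le_sq' (neg_le_of_abs_le h) (le_of_abs_le h)]

lemma circ_dist_pos (x y c d : ℤ × ℤ) (h : x ≠ y) :
    0 < ((2 * x.1 - c.1) - (2 * y.1 - c.1)) ^ 2 + ((2 * x.2 - d.2) - (2 * y.2 - d.2)) ^ 2 := by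
  by_contra hc
  apply h
  have h1 := sq_nonneg ((2 * x.1 - c.1) - (2 * y.1 - c.1))
  have h2 := sq_nonneg ((2 * x.2 - d.2) - (2 * y.2 - d.2))
  have h3 : (2 * x.1 - c.1) - (2 * y.1 - c.1) = 0 := by
    apply pow_eq_zero_iff (two_ne_zero) |>.mp; linarith
  have h4 : (2 * x.2 - d.2) - (2 * y.2 - d.2) = 0 := by
    apply pow_eq_zero_iff (two_ne_zero) |>.mp; linarith
  ext <;> linarith

lemma circle_bound (ε : ℝ) (hε : 0 < ε) : ∃ C : ℝ, 1 ≤ C ∧ ∀ (M : ℕ), 1 ≤ M →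
    ∀ (T : Finset (ℤ × ℤ)) (c : ℤ × ℤ) (K : ℤ),
    (∀ x ∈ T, |x.1| ≤ M ∧ |x.2| ≤ M ∧ (2 * x.1 - c.1) ^ 2 + (2 * x.2 - c.2) ^ 2 = K) →
    (T.card : ℝ) ≤ C * (M : ℝ) ^ ε := by
  classical
  obtain ⟨C, hC, hdiv⟩ := divisor_bound (ε / 6) (by positivity)
  have h8 : (1 : ℝ) ≤ (8192 : ℝ) ^ (ε / 6) := Real.one_le_rpow (by norm_num) (by positivity)
  have h9 : (9 : ℝ) ≤ 9 * C * (8192 : ℝ) ^ (ε / 6) := by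
    have := mul_le_mul hC h8 (by norm_num) (by linarith)
    linarith
  refine ⟨9 * C * (8192 : ℝ) ^ (ε / 6), by linarith, ?_⟩
  intro M hM T c K hT
  have hM1 : (1 : ℝ) ≤ (M : ℝ) ^ ε := Real.one_le_rpow (by exact_mod_cast hM) hε.le
  have small : T.card ≤ 2 → (T.card : ℝ) ≤ 9 * C * (8192 : ℝ) ^ (ε / 6) * (M : ℝ) ^ ε := by
    intro h
    have h' : (T.card : ℝ) ≤ 2 := by exact_mod_cast h
    nlinarith
  by_cases h3 : T.card ≤ 2
  · exact small h3
  have hK : K ≤ 8192 * (M : ℤ) ^ 6 ∧ 0 < K := by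
    push Not at h3
    obtain ⟨x, hx, y, hy, z, hz, hxy, hxz, hyz⟩ := two_lt_card.mp h3
    obtain ⟨hx1, hx2, hxK⟩ := hT x hx
    obtain ⟨hy1, hy2, hyK⟩ := hT y hy
    obtain ⟨hz1, hz2, hzK⟩ := hT z hz
    have id := three_circle K _ _ _ _ _ _ hxK hyK hzK
    have a1 := circ_dist_pos y x c c hxy.symm
    have a2 := circ_dist_pos z x c c hxz.symm
    have a3 := circ_dist_pos y z c c hyz
    have b1 := add_le_add (sq_sub_bound M y.1 x.1 c.1 hy1 hx1) (sq_sub_bound M y.2 x.2 c.2 hy2 hx2)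
    have b2 := add_le_add (sq_sub_bound M z.1 x.1 c.1 hz1 hx1) (sq_sub_bound M z.2 x.2 c.2 hz2 hx2)
    have b3 := add_le_add (sq_sub_bound M y.1 z.1 c.1 hy1 hz1) (sq_sub_bound M y.2 z.2 c.2 hy2 hz2)
    have pos := mul_pos (mul_pos a1 a2) a3
    have bd := mul_le_mul (mul_le_mul b1 b2 a2.le (by positivity)) b3 a3.le (by positivity)
    rw [← id] at pos bd
    set D := ((2 * y.1 - c.1 - (2 * x.1 - c.1)) * (2 * z.2 - c.2 - (2 * x.2 - c.2)) -
      (2 * y.2 - c.2 - (2 * x.2 - c.2)) * (2 * z.1 - c.1 - (2 * x.1 - c.1)))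
    have hK0 : 0 ≤ K := by rw [← hxK]; positivity
    have hD : 0 < D ^ 2 := by
      rcases (sq_nonneg D).lt_or_eq with h | h
      · exact h
      · rw [← h] at pos; simp at pos
    refine ⟨?_, ?_⟩
    · have hm := mul_nonneg hK0 (show 0 ≤ D ^ 2 - 1 by linarith)
      have he : (16 * (M : ℤ) ^ 2 + 16 * (M : ℤ) ^ 2) * (16 * (M : ℤ) ^ 2 + 16 * (M : ℤ) ^ 2) *
        (16 * (M : ℤ) ^ 2 + 16 * (M : ℤ) ^ 2) = 32768 * (M : ℤ) ^ 6 := by ring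
      rw [he] at bd
      linarith
    · rcases hK0.lt_or_eq with h | h
      · exact h
      · rw [← h] at pos; simp at pos
  obtain ⟨k, rfl⟩ := Int.eq_ofNat_of_zero_le hK.2.le
  have hk0 : 0 < k := by exact_mod_cast hK.2
  have hk8 : (k : ℝ) ≤ 8192 * (M : ℝ) ^ 6 := by exact_mod_cast hK.1
  have hinj : Function.Injective (fun x : ℤ × ℤ => (⟨2 * x.1 - c.1, 2 * x.2 - c.2⟩ : GaussianInt)) := by
    intro x y h
    simp only [Zsqrtd.mk.injEq] at h
    ext <;> linarith [h.1, h.2]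
  have hg := gi_card k hk0
    (T.image (fun x : ℤ × ℤ => (⟨2 * x.1 - c.1, 2 * x.2 - c.2⟩ : GaussianInt))) (by
    intro z hz
    obtain ⟨x, hx, rfl⟩ := mem_image.mp hz
    rw [Zsqrtd.norm_def]
    have := (hT x hx).2.2
    rw [← this]; ring)
  rw [card_image_of_injective T hinj] at hg
  calc (T.card : ℝ) ≤ 9 * (k.divisors.card : ℝ) := by exact_mod_cast hg
    _ ≤ 9 * (C * (k : ℝ) ^ (ε / 6)) := by gcongr; exact hdiv k hk0
    _ ≤ 9 * (C * (8192 * (M : ℝ) ^ 6) ^ (ε / 6)) := by gcongr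
    _ = _ := by
      rw [Real.mul_rpow (by norm_num) (by positivity), ← Real.rpow_natCast, ← Real.rpow_mul (by positivity)]
      rw [show ((6 : ℕ) : ℝ) * (ε / 6) = ε by push_cast; ring]
      ring

lemma prog_card (S k : ℕ) (hS : 1 ≤ S) (hk : 1 ≤ k) (T : Finset ℤ)
    (hT : ∀ x ∈ T, |x| ≤ S) (hc : ∀ x ∈ T, ∀ y ∈ T, (k : ℤ) ∣ x - y) :
    (T.card : ℝ) ≤ 3 * S / k + 1 := by
  rcases T.eq_empty_or_nonempty with rfl | ⟨v, hv⟩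
  · simp; positivity
  have hsub : T ⊆ {x ∈ Ioc (-(S : ℤ) - 1) S | x ≡ v [ZMOD k]} := by
    intro x hx
    have h := abs_le.mp (hT x hx)
    simp only [mem_filter, mem_Ioc]
    exact ⟨⟨by omega, h.2⟩, (Int.modEq_iff_dvd.mpr (hc v hv x hx))⟩
  have h1 := Int.Ioc_filter_modEq_card (-(S : ℤ) - 1) S (r := k) (by omega) v
  have h2 : ((#{x ∈ Ioc (-(S : ℤ) - 1) S | x ≡ v [ZMOD k]} : ℕ) : ℚ) ≤ 3 * S / k + 1 := by
    have hk' : (0 : ℚ) < k := by exact_mod_cast hk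
    have hS' : (1 : ℚ) ≤ S := by exact_mod_cast hS
    have : ((#{x ∈ Ioc (-(S : ℤ) - 1) S | x ≡ v [ZMOD k]} : ℕ) : ℚ) =
      (((#{x ∈ Ioc (-(S : ℤ) - 1) S | x ≡ v [ZMOD k]} : ℕ) : ℤ) : ℚ) := by push_cast; rfl
    rw [this, h1]
    push_cast
    apply max_le _ (by positivity)
    have f1 := Int.floor_le (((S : ℚ) - v) / k)
    have f2 := Int.lt_floor_add_one (((-S - 1 : ℚ) - v) / k)
    have f3 : ((S : ℚ) - v) / k - ((-S - 1 : ℚ) - v) / k ≤ 3 * S / k := by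
      rw [← sub_div]; gcongr; linarith
    linarith
  have h3 : ((#{x ∈ Ioc (-(S : ℤ) - 1) S | x ≡ v [ZMOD k]} : ℕ) : ℝ) ≤ 3 * S / k + 1 := by
    have h4 := (Rat.cast_le (K := ℝ)).mpr h2
    push_cast at h4
    exact h4
  exact le_trans (by exact_mod_cast card_le_card hsub) h3

noncomputable def zbox (R : ℕ) : Finset (ℤ × ℤ) := Icc (-(R : ℤ)) R ×ˢ Icc (-(R : ℤ)) R

lemma mem_zbox (R : ℕ) (x : ℤ × ℤ) : x ∈ zbox R ↔ |x.1| ≤ R ∧ |x.2| ≤ R := by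
  simp [zbox, abs_le]

lemma zbox_card (R : ℕ) (hR : 1 ≤ R) : ((zbox R).card : ℝ) ≤ 9 * (R : ℝ) ^ 2 := by
  have h : (zbox R).card = (2 * R + 1) ^ 2 := by
    rw [zbox, card_product, Int.card_Icc, sq]
    congr 1 <;> omega
  rw [h]
  have : (1 : ℝ) ≤ R := by exact_mod_cast hR
  push_cast
  nlinarith

def primDir (a : ℤ × ℤ) : ℤ × ℤ := (a.1 / (Int.gcd a.1 a.2 : ℤ), a.2 / (Int.gcd a.1 a.2 : ℤ))

def supN (b : ℤ × ℤ) : ℕ := max b.1.natAbs b.2.natAbs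

lemma primDir_spec (a : ℤ × ℤ) (ha : a ≠ 0) : IsCoprime (primDir a).1 (primDir a).2 ∧
    ∃ g : ℤ, g ≠ 0 ∧ a.1 = g * (primDir a).1 ∧ a.2 = g * (primDir a).2 := by
  have hg : 0 < Int.gcd a.1 a.2 := by
    rw [Nat.pos_iff_ne_zero, Ne, Int.gcd_eq_zero_iff]
    rintro ⟨h1, h2⟩
    exact ha (Prod.ext h1 h2)
  refine ⟨?_, (Int.gcd a.1 a.2 : ℤ), by exact_mod_cast hg.ne', ?_, ?_⟩
  · rw [Int.isCoprime_iff_gcd_eq_one]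
    exact Int.gcd_ediv_gcd_ediv_gcd hg
  · exact (Int.mul_ediv_cancel' (Int.gcd_dvd_left ..)).symm
  · exact (Int.mul_ediv_cancel' (Int.gcd_dvd_right ..)).symm

lemma supN_pos (a : ℤ × ℤ) (ha : a ≠ 0) : 1 ≤ supN (primDir a) := by
  obtain ⟨-, g, hg, h1, h2⟩ := primDir_spec a ha
  by_contra h
  have h0 : (primDir a).1 = 0 ∧ (primDir a).2 = 0 := by
    unfold supN at h; omega
  rw [h0.1, mul_zero] at h1
  rw [h0.2, mul_zero] at h2
  exact ha (Prod.ext h1 h2)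

lemma line_card_aux (S : ℕ) (hS : 1 ≤ S) (b1 b2 c : ℤ) (hb : IsCoprime b1 b2) (h0 : b1 ≠ 0)
    (T : Finset (ℤ × ℤ)) (hT : ∀ y ∈ T, |y.2| ≤ S ∧ b1 * y.1 + b2 * y.2 = c) :
    (T.card : ℝ) ≤ 3 * S / b1.natAbs + 1 := by
  classical
  have hinj : Set.InjOn Prod.snd (T : Set (ℤ × ℤ)) := by
    intro x hx y hy hxy
    have h1 := (hT x hx).2
    have h2 := (hT y hy).2
    rw [hxy] at h1
    have : b1 * x.1 = b1 * y.1 := by linarith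
    exact Prod.ext (mul_left_cancel₀ h0 this) hxy
  rw [← card_image_of_injOn hinj]
  apply prog_card S _ hS (by omega)
  · intro x hx
    obtain ⟨y, hy, rfl⟩ := mem_image.mp hx
    exact (hT y hy).1
  · intro x hx x' hx'
    obtain ⟨y, hy, rfl⟩ := mem_image.mp hx
    obtain ⟨y', hy', rfl⟩ := mem_image.mp hx'
    rw [Int.natAbs_dvd]
    apply hb.dvd_of_dvd_mul_left
    have h1 := (hT y hy).2
    have h2 := (hT y' hy').2
    exact ⟨y'.1 - y.1, by linarith⟩

lemma line_card (S : ℕ) (hS : 1 ≤ S) (b1 b2 c : ℤ) (hb : IsCoprime b1 b2)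
    (T : Finset (ℤ × ℤ)) (hT : ∀ y ∈ T, |y.1| ≤ S ∧ |y.2| ≤ S ∧ b1 * y.1 + b2 * y.2 = c) :
    (T.card : ℝ) ≤ 3 * S / (max b1.natAbs b2.natAbs : ℕ) + 1 := by
  classical
  have hne : b1 ≠ 0 ∨ b2 ≠ 0 := hb.ne_zero_or_ne_zero
  rcases le_total b2.natAbs b1.natAbs with h | h
  · rw [max_eq_left h]
    exact line_card_aux S hS b1 b2 c hb (by omega) T (fun y hy => (hT y hy).2)
  · rw [max_eq_right h, ← card_image_of_injective T Prod.swap_injective]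
    apply line_card_aux S hS b2 b1 c hb.symm (by omega)
    intro y hy
    obtain ⟨z, hz, rfl⟩ := mem_image.mp hy
    obtain ⟨h1, h2, h3⟩ := hT z hz
    exact ⟨h1, by simp only [Prod.fst_swap, Prod.snd_swap]; linarith⟩

lemma sphere_card (k : ℕ) (hk : 1 ≤ k) (T : Finset (ℤ × ℤ)) (hT : ∀ b ∈ T, supN b = k) :
    (T.card : ℝ) ≤ 12 * k := by
  classical
  have hsub : T ⊆ ({(k : ℤ), -(k : ℤ)} : Finset ℤ) ×ˢ Icc (-(k : ℤ)) k ∪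
      Icc (-(k : ℤ)) k ×ˢ ({(k : ℤ), -(k : ℤ)} : Finset ℤ) := by
    intro b hb
    have h := hT b hb
    unfold supN at h
    simp only [mem_union, mem_product, mem_insert, mem_singleton, mem_Icc]
    omega
  have h2 : ({(k : ℤ), -(k : ℤ)} : Finset ℤ).card ≤ 2 := card_le_two
  have h3 : (Icc (-(k : ℤ)) k).card ≤ 3 * k := by rw [Int.card_Icc]; omega
  have : T.card ≤ 12 * k := by
    refine (card_le_card hsub).trans ((card_union_le _ _).trans ?_)
    rw [card_product, card_product]
    nlinarith [Nat.mul_le_mul h2 h3, Nat.mul_le_mul h3 h2]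
  exact_mod_cast this

lemma level_card (R : ℕ) (hR : 1 ≤ R) (q : ℤ × ℤ) (k : ℕ) (hk : 1 ≤ k) (hkR : k ≤ R) :
    ((#{x ∈ zbox R | x ≠ q ∧ supN (primDir (x - q)) = k} : ℕ) : ℝ) ≤ 48 * R := by
  classical
  set T := {x ∈ zbox R | x ≠ q ∧ supN (primDir (x - q)) = k} with hTdef
  have hT : ∀ x ∈ T, x ∈ zbox R ∧ x ≠ q ∧ supN (primDir (x - q)) = k := by
    intro x hx; simpa [hTdef] using hx
  have hkpos : (0 : ℝ) < k := by exact_mod_cast hk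
  have hfib : ∀ b ∈ T.image (fun x => primDir (x - q)),
      ((#{x ∈ T | primDir (x - q) = b} : ℕ) : ℝ) ≤ 3 * R / k + 1 := by
    intro b hb
    obtain ⟨x0, hx0, rfl⟩ := mem_image.mp hb
    obtain ⟨h1, h2, h3⟩ := hT x0 hx0
    obtain ⟨hcop, -⟩ := primDir_spec (x0 - q) (sub_ne_zero.mpr h2)
    set b := primDir (x0 - q) with hbdef
    have := line_card R hR b.2 (-b.1) (b.2 * q.1 - b.1 * q.2) hcop.symm.neg_right
      {x ∈ T | primDir (x - q) = b} (by
        intro y hy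
        obtain ⟨hyT, hyb⟩ := mem_filter.mp hy
        obtain ⟨g1, g2, g3⟩ := hT y hyT
        obtain ⟨-, g, hg, e1, e2⟩ := primDir_spec (y - q) (sub_ne_zero.mpr g2)
        rw [hyb] at e1 e2
        rw [mem_zbox] at g1
        refine ⟨g1.1, g1.2, ?_⟩
        simp only [Prod.fst_sub, Prod.snd_sub] at e1 e2
        linear_combination b.2 * e1 - b.1 * e2)
    rw [Int.natAbs_neg, max_comm] at this
    rw [show max b.1.natAbs b.2.natAbs = k from h3] at this
    exact this
  have hsum : (T.card : ℝ) = ∑ b ∈ T.image (fun x => primDir (x - q)),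
      ((#{x ∈ T | primDir (x - q) = b} : ℕ) : ℝ) := by
    rw [← Nat.cast_sum]
    congr 1
    exact card_eq_sum_card_image _ _
  rw [hsum]
  refine (sum_le_sum hfib).trans ?_
  rw [sum_const, nsmul_eq_mul]
  have hs := sphere_card k hk (T.image (fun x => primDir (x - q))) (by
    intro b hb
    obtain ⟨x, hx, rfl⟩ := mem_image.mp hb
    exact (hT x hx).2.2)
  have hkR' : (k : ℝ) ≤ R := by exact_mod_cast hkR
  calc _ ≤ 12 * (k : ℝ) * (3 * R / k + 1) := by gcongr
    _ = 36 * R + 12 * k := by field_simp; ring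
    _ ≤ _ := by linarith

lemma inv_sum (R : ℕ) (hR : 1 ≤ R) (q : ℤ × ℤ) :
    ∑ x ∈ {x ∈ zbox R | x ≠ q}, (1 : ℝ) / (supN (primDir (x - q)) : ℝ) ≤
      57 * R * (1 + Real.log R) := by
  classical
  have hR1 : (1 : ℝ) ≤ R := by exact_mod_cast hR
  have hlog : 0 ≤ Real.log R := Real.log_nonneg hR1
  rw [← sum_filter_add_sum_filter_not _ (fun x => supN (primDir (x - q)) ≤ R)]
  have h1 : ∑ x ∈ {x ∈ {x ∈ zbox R | x ≠ q} | supN (primDir (x - q)) ≤ R},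
      (1 : ℝ) / (supN (primDir (x - q)) : ℝ) ≤ 48 * R * (1 + Real.log R) := by
    rw [← sum_fiberwise_of_maps_to (t := Icc 1 R) (g := fun x => supN (primDir (x - q)))]
    · calc _ ≤ ∑ k ∈ Icc 1 R, 48 * (R : ℝ) * (k : ℝ)⁻¹ := by
            apply sum_le_sum
            intro k hk
            rw [mem_Icc] at hk
            have hl := level_card R hR q k hk.1 hk.2
            rw [sum_congr rfl (g := fun _ => (k : ℝ)⁻¹)]
            · rw [sum_const, nsmul_eq_mul]
              gcongr
              refine le_trans ?_ hl
              exact_mod_cast card_le_card (fun x hx => by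
                simp only [mem_filter] at hx ⊢; tauto)
            · intro x hx
              simp only [mem_filter] at hx
              rw [hx.2, one_div]
        _ = 48 * R * ((harmonic R : ℚ) : ℝ) := by
            rw [← mul_sum, harmonic_eq_sum_Icc]; push_cast; rfl
        _ ≤ _ := by gcongr; exact harmonic_le_one_add_log R
    · intro x hx
      simp only [mem_filter] at hx
      rw [mem_Icc]
      exact ⟨supN_pos _ (sub_ne_zero.mpr hx.1.2), hx.2⟩
  have h2 : ∑ x ∈ {x ∈ {x ∈ zbox R | x ≠ q} | ¬ supN (primDir (x - q)) ≤ R},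
      (1 : ℝ) / (supN (primDir (x - q)) : ℝ) ≤ 9 * R := by
    calc _ ≤ ∑ x ∈ {x ∈ {x ∈ zbox R | x ≠ q} | ¬ supN (primDir (x - q)) ≤ R}, (1 : ℝ) / R := by
          apply sum_le_sum
          intro x hx
          simp only [mem_filter, not_le] at hx
          have : (R : ℝ) ≤ supN (primDir (x - q)) := by exact_mod_cast hx.2.le
          gcongr
      _ ≤ (9 * (R : ℝ) ^ 2) * (1 / R) := by
          rw [sum_const, nsmul_eq_mul]
          gcongr
          refine le_trans ?_ (zbox_card R hR)
          exact_mod_cast card_le_card (fun x hx => by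
                simp only [mem_filter] at hx ⊢; tauto)
      _ = 9 * R := by field_simp
  nlinarith [mul_nonneg (show (0 : ℝ) ≤ R by linarith) hlog]

lemma pairs_bound (R S : ℕ) (hR : 1 ≤ R) (hRS : R ≤ S) (q : ℤ × ℤ) (c : ℤ × ℤ → ℤ)
    (P : Finset ((ℤ × ℤ) × (ℤ × ℤ)))
    (hP : ∀ t ∈ P, t.1 ∈ zbox R ∧ t.2 ∈ zbox S ∧ t.1 ≠ q ∧
      (t.1.1 - q.1) * t.2.1 + (t.1.2 - q.2) * t.2.2 = c t.1) :
    (P.card : ℝ) ≤ 180 * (R * S) * (1 + Real.log R) := by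
  classical
  have hS : 1 ≤ S := hR.trans hRS
  have hR1 : (1 : ℝ) ≤ R := by exact_mod_cast hR
  have hRS' : (R : ℝ) ≤ S := by exact_mod_cast hRS
  have hlog : 0 ≤ Real.log R := Real.log_nonneg hR1
  have hsum : (P.card : ℝ) = ∑ x ∈ {x ∈ zbox R | x ≠ q}, ((#{t ∈ P | t.1 = x} : ℕ) : ℝ) := by
    rw [← Nat.cast_sum]
    congr 1
    apply card_eq_sum_card_fiberwise
    intro t ht
    have := hP t ht
    simp only [coe_filter, Set.mem_ofPred_eq]
    tauto
  have hfib : ∀ x ∈ {x ∈ zbox R | x ≠ q}, ((#{t ∈ P | t.1 = x} : ℕ) : ℝ) ≤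
      3 * S * (1 / (supN (primDir (x - q)) : ℝ)) + 1 := by
    intro x hx
    obtain ⟨hx1, hx2⟩ := mem_filter.mp hx
    have hinj : Set.InjOn Prod.snd ({t ∈ P | t.1 = x} : Set ((ℤ × ℤ) × (ℤ × ℤ))) := by
      intro s hs t ht hst
      simp only [Set.mem_ofPred_eq] at hs ht
      exact Prod.ext (hs.2.trans ht.2.symm) hst
    rw [← card_image_of_injOn (s := {t ∈ P | t.1 = x}) (by simpa using hinj)]
    obtain ⟨hcop, g, hg, e1, e2⟩ := primDir_spec (x - q) (sub_ne_zero.mpr hx2)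
    have := line_card S hS (primDir (x - q)).1 (primDir (x - q)).2 (c x / g) hcop
      (({t ∈ P | t.1 = x} : Finset _).image Prod.snd) (by
        intro y hy
        obtain ⟨t, ht, rfl⟩ := mem_image.mp hy
        obtain ⟨ht1, ht2⟩ := mem_filter.mp ht
        obtain ⟨h1, h2, h3, h4⟩ := hP t ht1
        rw [mem_zbox] at h2
        refine ⟨h2.1, h2.2, ?_⟩
        symm
        apply Int.ediv_eq_of_eq_mul_right hg
        rw [ht2] at h4
        simp only [Prod.fst_sub, Prod.snd_sub] at e1 e2
        rw [← h4, e1, e2]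
        ring)
    rw [mul_one_div]
    exact this
  rw [hsum]
  refine (sum_le_sum hfib).trans ?_
  rw [sum_add_distrib, ← mul_sum, sum_const, nsmul_eq_mul, mul_one]
  have hi := inv_sum R hR q
  have hc : ((#{x ∈ zbox R | x ≠ q} : ℕ) : ℝ) ≤ 9 * (R : ℝ) ^ 2 := by
    refine le_trans ?_ (zbox_card R hR)
    exact_mod_cast card_filter_le _ _
  have : 3 * (S : ℝ) * ∑ x ∈ {x ∈ zbox R | x ≠ q}, (1 : ℝ) / (supN (primDir (x - q)) : ℝ) ≤
      3 * S * (57 * R * (1 + Real.log R)) := by gcongr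
  have h9 : 9 * (R : ℝ) ^ 2 ≤ 9 * (R * S) * (1 + Real.log R) := by
    have : (R : ℝ) ^ 2 ≤ R * S := by nlinarith
    have h0 : 0 ≤ (R : ℝ) * S * Real.log R := by positivity
    nlinarith
  linarith

lemma sim_zbox (k : ℕ) (n : ℤ × ℤ) (h : simDyadic (2 ^ k) n) : n ∈ zbox (2 ^ k) := by
  have h1 : znorm n ≤ 2 ^ k := by
    rcases h with ⟨h1, h2⟩ | ⟨_, _, h2⟩
    · rw [h1]; exact h2
    · exact h2
  unfold znorm at h1
  have a1 : |(n.1 : ℝ)| ≤ 2 ^ k := (Real.abs_le_sqrt (by nlinarith [sq_nonneg (n.2 : ℝ)])).trans h1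
  have a2 : |(n.2 : ℝ)| ≤ 2 ^ k := (Real.abs_le_sqrt (by nlinarith [sq_nonneg (n.1 : ℝ)])).trans h1
  rw [mem_zbox]
  constructor
  · have : ((|n.1| : ℤ) : ℝ) ≤ (((2 ^ k : ℕ) : ℤ) : ℝ) := by push_cast; exact a1
    exact_mod_cast this
  · have : ((|n.2| : ℤ) : ℝ) ≤ (((2 ^ k : ℕ) : ℤ) : ℝ) := by push_cast; exact a2
    exact_mod_cast this

/-- The purely algebraic content of membership, with `n₂ = q`. -/
def Core (A B D : ℕ) (m : ℤ) (q n n₁ n₃ : ℤ × ℤ) : Prop :=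
  n = n₁ - q + n₃ ∧ n₁ ≠ q ∧ n₃ ≠ q ∧
    2 * ((n₁.1 - q.1) * (n₃.1 - q.1) + (n₁.2 - q.2) * (n₃.2 - q.2)) = m ∧
    n ∈ zbox A ∧ n₁ ∈ zbox B ∧ n₃ ∈ zbox D

lemma Core.symm {A B D : ℕ} {m : ℤ} {q n n₁ n₃ : ℤ × ℤ} (h : Core A B D m q n n₁ n₃) :
    Core A D B m q n n₃ n₁ := by
  obtain ⟨h1, h2, h3, h4, h5, h6, h7⟩ := h
  exact ⟨by rw [h1]; abel, h3, h2, by linarith, h5, h7, h6⟩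

lemma log_bound (ε : ℝ) (hε : 0 < ε) (R S : ℕ) (hR : 1 ≤ R) (hS : 1 ≤ S) :
    180 * ((R : ℝ) * S) * (1 + Real.log R) ≤ 180 * (1 + 1 / ε) * ((R : ℝ) * S) ^ (1 + ε) := by
  have hR1 : (1 : ℝ) ≤ R := by exact_mod_cast hR
  have hS1 : (1 : ℝ) ≤ S := by exact_mod_cast hS
  have h1 := Real.log_le_rpow_div (x := (R : ℝ)) (by linarith) hε
  have h2 : (1 : ℝ) ≤ (R : ℝ) ^ ε := Real.one_le_rpow hR1 hε.le
  have h3 : (R : ℝ) ^ ε ≤ ((R : ℝ) * S) ^ ε := by gcongr; nlinarith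
  rw [Real.rpow_add (by positivity), Real.rpow_one]
  have h4 : 1 + Real.log R ≤ (1 + 1 / ε) * ((R : ℝ) * S) ^ ε := by
    calc 1 + Real.log R ≤ (R : ℝ) ^ ε + (R : ℝ) ^ ε / ε := by linarith
      _ = (1 + 1 / ε) * (R : ℝ) ^ ε := by ring
      _ ≤ _ := by gcongr
  calc 180 * ((R : ℝ) * S) * (1 + Real.log R)
      ≤ 180 * ((R : ℝ) * S) * ((1 + 1 / ε) * ((R : ℝ) * S) ^ ε) := by gcongr
    _ = _ := by ring

/-- bound through the pair `(n₁, n₃)` when `B ≤ D`. -/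
lemma bound13 (ε : ℝ) (hε : 0 < ε) (A B D : ℕ) (m : ℤ) (q : ℤ × ℤ) (hB : 1 ≤ B) (hBD : B ≤ D)
    (T : Finset ((ℤ × ℤ) × (ℤ × ℤ) × (ℤ × ℤ)))
    (hT : ∀ t ∈ T, Core A B D m q t.1 t.2.1 t.2.2) :
    (T.card : ℝ) ≤ 180 * (1 + 1 / ε) * ((B : ℝ) * D) ^ (1 + ε) := by
  classical
  have hinj : Set.InjOn (fun t : (ℤ × ℤ) × (ℤ × ℤ) × (ℤ × ℤ) => t.2) (T : Set _) := by
    intro s hs t ht hst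
    have h1 := (hT s hs).1
    have h2 := (hT t ht).1
    simp only at hst
    exact Prod.ext (by rw [h1, h2, hst]) hst
  rw [← card_image_of_injOn hinj]
  refine le_trans (pairs_bound B D hB hBD q
    (fun x => m / 2 + ((x.1 - q.1) * q.1 + (x.2 - q.2) * q.2)) _ ?_)
    (log_bound ε hε B D hB (hB.trans hBD))
  intro p hp
  obtain ⟨t, ht, rfl⟩ := mem_image.mp hp
  obtain ⟨h1, h2, h3, h4, h5, h6, h7⟩ := hT t ht
  refine ⟨h6, h7, h2, ?_⟩
  have : m / 2 = ((t.2.1.1 - q.1) * (t.2.2.1 - q.1) + (t.2.1.2 - q.2) * (t.2.2.2 - q.2)) := by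
    omega
  rw [this]; ring

/-- bound through the pair `(n₁, n)` when `B ≤ A`. -/
lemma bound10 (ε : ℝ) (hε : 0 < ε) (A B D : ℕ) (m : ℤ) (q : ℤ × ℤ) (hB : 1 ≤ B) (hBA : B ≤ A)
    (T : Finset ((ℤ × ℤ) × (ℤ × ℤ) × (ℤ × ℤ)))
    (hT : ∀ t ∈ T, Core A B D m q t.1 t.2.1 t.2.2) :
    (T.card : ℝ) ≤ 180 * (1 + 1 / ε) * ((A : ℝ) * B) ^ (1 + ε) := by
  classical
  have hinj : Set.InjOn (fun t : (ℤ × ℤ) × (ℤ × ℤ) × (ℤ × ℤ) => (t.2.1, t.1)) (T : Set _) := by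
    intro s hs t ht hst
    have h1 := (hT s hs).1
    have h2 := (hT t ht).1
    simp only [Prod.mk.injEq] at hst
    refine Prod.ext hst.2 (Prod.ext hst.1 ?_)
    rw [hst.1, hst.2, h2] at h1
    exact (add_left_cancel h1).symm
  rw [← card_image_of_injOn hinj, mul_comm (A : ℝ)]
  refine le_trans (pairs_bound B A hB hBA q
    (fun x => m / 2 + ((x.1 - q.1) * x.1 + (x.2 - q.2) * x.2)) _ ?_)
    (log_bound ε hε B A hB (hB.trans hBA))
  intro p hp
  obtain ⟨t, ht, rfl⟩ := mem_image.mp hp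
  obtain ⟨h1, h2, h3, h4, h5, h6, h7⟩ := hT t ht
  refine ⟨h6, h5, h2, ?_⟩
  have : m / 2 = ((t.2.1.1 - q.1) * (t.2.2.1 - q.1) + (t.2.1.2 - q.2) * (t.2.2.2 - q.2)) := by
    omega
  rw [this, h1]
  simp only [Prod.fst_sub, Prod.snd_sub, Prod.fst_add, Prod.snd_add]
  ring

/-- bound through circles. -/
lemma boundCirc (ε C : ℝ) (hC : 1 ≤ C) (hcirc : ∀ (M : ℕ), 1 ≤ M →
    ∀ (T : Finset (ℤ × ℤ)) (c : ℤ × ℤ) (K : ℤ),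
    (∀ x ∈ T, |x.1| ≤ M ∧ |x.2| ≤ M ∧ (2 * x.1 - c.1) ^ 2 + (2 * x.2 - c.2) ^ 2 = K) →
    (T.card : ℝ) ≤ C * (M : ℝ) ^ ε) (A B D : ℕ) (m : ℤ) (q : ℤ × ℤ) (hA : 1 ≤ A) (hB : 1 ≤ B)
    (T : Finset ((ℤ × ℤ) × (ℤ × ℤ) × (ℤ × ℤ)))
    (hT : ∀ t ∈ T, Core A B D m q t.1 t.2.1 t.2.2) :
    (T.card : ℝ) ≤ 9 * C * ((A : ℝ) ^ 2 * (B : ℝ) ^ ε) := by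
  classical
  have hsum : (T.card : ℝ) = ∑ n ∈ zbox A, ((#{t ∈ T | t.1 = n} : ℕ) : ℝ) := by
    rw [← Nat.cast_sum]
    congr 1
    apply card_eq_sum_card_fiberwise
    intro t ht
    exact (hT t ht).2.2.2.2.1
  have hfib : ∀ n ∈ zbox A, ((#{t ∈ T | t.1 = n} : ℕ) : ℝ) ≤ C * (B : ℝ) ^ ε := by
    intro n hn
    have hinj : Set.InjOn (fun t : (ℤ × ℤ) × (ℤ × ℤ) × (ℤ × ℤ) => t.2.1)
        (({t ∈ T | t.1 = n} : Finset _) : Set _) := by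
      intro s hs t ht hst
      obtain ⟨hs1, hs2⟩ := mem_filter.mp (mem_coe.mp hs)
      obtain ⟨ht1, ht2⟩ := mem_filter.mp (mem_coe.mp ht)
      have h1 := (hT s hs1).1
      have h2 := (hT t ht1).1
      simp only at hst
      refine Prod.ext (hs2.trans ht2.symm) (Prod.ext hst ?_)
      rw [hs2, hst, ← ht2, h2] at h1
      exact (add_left_cancel h1).symm
    rw [← card_image_of_injOn hinj]
    apply hcirc B hB _ (n + q) ((n.1 - q.1) ^ 2 + (n.2 - q.2) ^ 2 - 2 * m)
    intro x hx
    obtain ⟨t, ht, rfl⟩ := mem_image.mp hx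
    obtain ⟨ht1, ht2⟩ := mem_filter.mp ht
    obtain ⟨h1, h2, h3, h4, h5, h6, h7⟩ := hT t ht1
    rw [mem_zbox] at h6
    refine ⟨h6.1, h6.2, ?_⟩
    rw [← ht2, h1, ← h4]
    simp only [Prod.fst_sub, Prod.snd_sub, Prod.fst_add, Prod.snd_add]
    ring
  rw [hsum]
  refine (sum_le_sum hfib).trans ?_
  rw [sum_const, nsmul_eq_mul]
  calc _ ≤ 9 * (A : ℝ) ^ 2 * (C * (B : ℝ) ^ ε) := by gcongr; exact zbox_card A hA
    _ = _ := by ring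

lemma sq_rpow_le (ε : ℝ) (hε : 0 < ε) (A B : ℕ) (hA : 1 ≤ A) (hAB : A ≤ B) :
    (A : ℝ) ^ 2 * (B : ℝ) ^ ε ≤ ((A : ℝ) * B) ^ (1 + ε) := by
  have hA1 : (1 : ℝ) ≤ A := by exact_mod_cast hA
  have hAB' : (A : ℝ) ≤ B := by exact_mod_cast hAB
  have hB0 : (0 : ℝ) < B := by linarith
  have hA0 : (0 : ℝ) < A := by linarith
  rw [Real.rpow_add (by positivity), Real.rpow_one]
  have : (B : ℝ) ≤ A * B := by nlinarith
  have h2 : (A : ℝ) ^ 2 ≤ A * B := by nlinarith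
  gcongr

theorem stmt7 (ε : ℝ) (hε : 0 < ε) :
    ∃ C : ℝ, 0 < C ∧ ∀ N N₁ N₂ N₃ : ℝ,
      IsDyadic N → IsDyadic N₁ → IsDyadic N₂ → IsDyadic N₃ → ∀ m : ℤ, ∀ n₂ : ℤ × ℤ,
      (({t : (ℤ × ℤ) × (ℤ × ℤ) × (ℤ × ℤ) |
          SMem N N₁ N₂ N₃ m t.1 t.2.1 n₂ t.2.2}).ncard : ℝ) ≤
        C * min (min (N ^ 2 * (min N₁ N₃) ^ ε) ((N * N₁) ^ (1 + ε)))
                (min ((N * N₃) ^ (1 + ε)) ((N₁ * N₃) ^ (1 + ε))) := by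
  classical
  obtain ⟨C, hC, hcirc⟩ := circle_bound ε hε
  have hinv : 0 < 1 / ε := by positivity
  set L : ℝ := 180 * (1 + 1 / ε) with hL
  have hL0 : 0 < L := by positivity
  refine ⟨9 * C + L, by positivity, ?_⟩
  rintro N N₁ N₂ N₃ ⟨a, rfl⟩ ⟨b, rfl⟩ - ⟨d, rfl⟩ m q
  set U := {t : (ℤ × ℤ) × (ℤ × ℤ) × (ℤ × ℤ) |
          SMem (2 ^ a) (2 ^ b) N₂ (2 ^ d) m t.1 t.2.1 q t.2.2} with hU
  set A : ℕ := 2 ^ a with hA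
  set B : ℕ := 2 ^ b with hB
  set D : ℕ := 2 ^ d with hD
  have eA : (2 : ℝ) ^ a = (A : ℝ) := by rw [hA]; push_cast; rfl
  have eB : (2 : ℝ) ^ b = (B : ℝ) := by rw [hB]; push_cast; rfl
  have eD : (2 : ℝ) ^ d = (D : ℝ) := by rw [hD]; push_cast; rfl
  have A1 : 1 ≤ A := Nat.one_le_two_pow
  have B1 : 1 ≤ B := Nat.one_le_two_pow
  have D1 : 1 ≤ D := Nat.one_le_two_pow
  have hcore : ∀ t ∈ U, Core A B D m q t.1 t.2.1 t.2.2 := by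
    rintro ⟨n, n₁, n₃⟩ ht
    obtain ⟨h1, h2, h3, h4, h5, h6, h7, h8⟩ := ht
    simp only at h1 h2 h3 h4 h5 h6 h8
    refine ⟨h1, ?_, ?_, ?_, sim_zbox a n h5, sim_zbox b n₁ h6, sim_zbox d n₃ h8⟩
    · rintro rfl; apply h3; simp [h1]
    · rintro rfl; apply h2; simp [h1]
    · rw [← h4, h1]
      simp only [phiFn, nsq, Prod.fst_sub, Prod.snd_sub, Prod.fst_add, Prod.snd_add]
      ring
  have hfin : U.Finite := by
    apply Set.Finite.subset (finite_toSet (zbox A ×ˢ zbox B ×ˢ zbox D))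
    intro t ht
    obtain ⟨-, -, -, -, h5, h6, h7⟩ := hcore t ht
    simp only [coe_product, Set.mem_prod, mem_coe]
    exact ⟨h5, h6, h7⟩
  rw [Set.ncard_eq_toFinset_card U hfin, eA, eB, eD]
  set T := hfin.toFinset with hTdef
  have hT : ∀ t ∈ T, Core A B D m q t.1 t.2.1 t.2.2 := fun t ht =>
    hcore t (by simpa [hTdef] using ht)
  set T' := T.image (fun t => (t.1, t.2.2, t.2.1)) with hT'def
  have hT'card : T'.card = T.card := by
    apply card_image_of_injective
    rintro ⟨x, y, z⟩ ⟨x', y', z'⟩ h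
    simp only [Prod.mk.injEq] at h ⊢
    tauto
  have hT' : ∀ t ∈ T', Core A D B m q t.1 t.2.1 t.2.2 := by
    intro t ht
    obtain ⟨s, hs, rfl⟩ := mem_image.mp ht
    exact (hT s hs).symm
  have c1 := boundCirc ε C hC hcirc A B D m q A1 B1 T hT
  have c3 := boundCirc ε C hC hcirc A D B m q A1 D1 T' hT'
  rw [hT'card] at c3
  have up9 : ∀ x : ℝ, 0 ≤ x → 9 * C * x ≤ (9 * C + L) * x := fun x hx => by
    gcongr; linarith
  have upL : ∀ x : ℝ, 0 ≤ x → L * x ≤ (9 * C + L) * x := fun x hx => by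
    gcongr; linarith
  have main : ∀ y : ℝ, 0 ≤ y → ((T.card : ℝ) ≤ 9 * C * y ∨ (T.card : ℝ) ≤ L * y) →
      (T.card : ℝ) ≤ (9 * C + L) * y := by
    rintro y hy (h | h)
    · exact h.trans (up9 y hy)
    · exact h.trans (upL y hy)
  have hpos : 0 < 9 * C + L := by positivity
  rw [mul_min_of_nonneg _ _ hpos.le, mul_min_of_nonneg _ _ hpos.le, mul_min_of_nonneg _ _ hpos.le]
  refine le_min (le_min ?_ ?_) (le_min ?_ ?_)
  · apply main _ (by positivity)
    left
    rcases le_total (B : ℝ) D with h | h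
    · rw [min_eq_left h]; exact c1
    · rw [min_eq_right h]; exact c3
  · apply main _ (by positivity)
    rcases le_total A B with h | h
    · left
      refine c1.trans ?_
      gcongr
      exact sq_rpow_le ε hε A B A1 h
    · right
      exact bound10 ε hε A B D m q B1 h T hT
  · apply main _ (by positivity)
    rcases le_total A D with h | h
    · left
      refine c3.trans ?_
      gcongr
      exact sq_rpow_le ε hε A D A1 h
    · right
      rw [← hT'card]
      exact bound10 ε hε A D B m q D1 h T' hT'
  · apply main _ (by positivity)
    right
    rcases le_total B D with h | h
    · exact bound13 ε hε A B D m q B1 h T hT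
    · rw [← hT'card, mul_comm (B : ℝ)]
      exact bound13 ε hε A D B m q D1 h T' hT'
end

section
/- For every ε > 0 there exists C_ε > 0 with the following property. For all dyadic N, N₁, N₂, N₃ ≥ 1, all m ∈ ℤ, and every fixed n₃ ∈ ℤ², the number of triples (n, n₁, n₂) with (n, n₁, n₂, n₃) ∈ S^{𝐍,(m)} is at most C_ε · min( N₁² (min(N, N₂))^ε, (N N₁)^{1+ε}, (N N₂)^{1+ε}, (N₁ N₂)^{1+ε} ), uniformly in n₃ and m. -/
def RG (k : ℕ) : Set GaussianInt := {w | w.norm = (k : ℤ)}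

theorem RG_norm (w : GaussianInt) : w.norm = w.re ^ 2 + w.im ^ 2 := by
  rw [Zsqrtd.norm_def]; ring

theorem RG_sub (k : ℕ) : RG k ⊆ (fun x : ℤ × ℤ => (⟨x.1, x.2⟩ : GaussianInt)) ''
    ((Finset.Icc (-(k:ℤ)) k ×ˢ Finset.Icc (-(k:ℤ)) k : Finset (ℤ × ℤ)) : Set (ℤ × ℤ)) := by
  intro w hw
  have h : w.re ^ 2 + w.im ^ 2 = k := by rw [← RG_norm]; exact hw
  refine ⟨(w.re, w.im), ?_, rfl⟩
  simp only [Finset.coe_product, Set.mem_prod, Finset.coe_Icc, Set.mem_Icc]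
  have h1 : w.re ^ 2 ≤ k := by nlinarith [sq_nonneg w.im]
  have h2 : w.im ^ 2 ≤ k := by nlinarith [sq_nonneg w.re]
  have aux : ∀ x : ℤ, x ^ 2 ≤ k → -(k:ℤ) ≤ x ∧ x ≤ k := by
    intro x hx
    have a1 : x ≤ x ^ 2 := by
      rcases le_or_gt x 0 with h | h <;> nlinarith
    have a2 : -x ≤ x ^ 2 := by
      rcases le_or_gt (-x) 0 with h | h <;> nlinarith
    constructor <;> linarith
  exact ⟨aux _ h1, aux _ h2⟩

theorem RG_fin (k : ℕ) : (RG k).Finite :=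
  ((Finset.finite_toSet _).image _).subset (RG_sub k)

theorem RG_one : (RG 1).ncard ≤ 9 := by
  refine (Set.ncard_le_ncard (RG_sub 1) ((Finset.finite_toSet _).image _)).trans ?_
  refine (Set.ncard_image_le (Finset.finite_toSet _)).trans ?_
  rw [Set.ncard_coe_finset]
  decide

theorem RG_mul (a b : ℕ) (ha : 0 < a) (hab : Nat.Coprime a b) :
    (RG (a * b)).ncard ≤ (RG a).ncard * (RG b).ncard := by
  have hsub : RG (a * b) ⊆ (fun x : GaussianInt × GaussianInt => x.1 * x.2) '' (RG a ×ˢ RG b) := by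
    intro w hw
    have hw' : w * star w = ((a * b : ℕ) : GaussianInt) := by
      have := Zsqrtd.norm_eq_mul_conj w
      rw [← this]
      have hw2 : w.norm = ((a * b : ℕ) : ℤ) := hw
      rw [hw2]; simp
    obtain ⟨α, β, hu⟩ : ∃ α β, EuclideanDomain.gcd w (a : GaussianInt) = w * α + a * β :=
      ⟨_, _, EuclideanDomain.gcd_eq_gcd_ab w (a : GaussianInt)⟩
    have hdw := EuclideanDomain.gcd_dvd_left w (a : GaussianInt)
    have hda := EuclideanDomain.gcd_dvd_right w (a : GaussianInt)
    set u := EuclideanDomain.gcd w (a : GaussianInt) with hudef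
    obtain ⟨v, hv⟩ := hdw
    obtain ⟨z, hz⟩ := hda
    have sa : star (a : GaussianInt) = a := star_natCast a
    have h1 : (a : GaussianInt) ∣ u * star u := by
      have : u * star u = (w * star w) * (α * star α) + a * (w * α * star β + β * star w * star α
          + a * β * star β) := by
        rw [hu, star_add, star_mul, star_mul, sa]; ring
      rw [this, hw']
      push_cast
      exact ⟨b * (α * star α) + (w * α * star β + β * star w * star α
          + a * β * star β), by ring⟩
    have h2 : u * star u ∣ (a : GaussianInt) := by
      have e1 : u * star u ∣ ((a * b : ℕ) : GaussianInt) := by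
        rw [← hw']; refine ⟨v * star v, ?_⟩
        conv_lhs => rw [hv]
        rw [star_mul]; ring
      have e2 : u * star u ∣ (a : GaussianInt) * a := by
        refine ⟨z * star z, ?_⟩
        have : (a : GaussianInt) * a = a * star (a : GaussianInt) := by rw [sa]
        rw [this, hz, star_mul]; ring
      have hc : (IsCoprime (a : ℤ) (b : ℤ)) := Nat.isCoprime_iff_coprime.mpr hab
      obtain ⟨x, y, hxy⟩ := hc
      have hxy' : (x : GaussianInt) * a + y * b = 1 := by exact_mod_cast congrArg (Int.cast : ℤ → GaussianInt) hxy
      have : (a : GaussianInt) = a * a * x + ((a * b : ℕ) : GaussianInt) * y := by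
        push_cast
        linear_combination (-(a : GaussianInt)) * hxy'
      rw [this]
      exact dvd_add (e2.mul_right _) (e1.mul_right _)
    have h3 : u.norm = a := by
      rw [← Zsqrtd.norm_eq_mul_conj] at h1 h2
      have g1 : (a : ℤ) ∣ u.norm := by
        have : ((a : ℤ) : GaussianInt) ∣ ((u.norm : ℤ) : GaussianInt) := by simpa using h1
        exact (Zsqrtd.intCast_dvd_intCast _ _).1 this
      have g2 : u.norm ∣ (a : ℤ) := by
        have : ((u.norm : ℤ) : GaussianInt) ∣ ((a : ℤ) : GaussianInt) := by simpa using h2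
        exact (Zsqrtd.intCast_dvd_intCast _ _).1 this
      exact Int.dvd_antisymm (by rw [RG_norm]; positivity) (by positivity) g2 g1
    refine ⟨(u, v), ⟨h3, ?_⟩, hv.symm⟩
    have h4 : u.norm * v.norm = ((a * b : ℕ) : ℤ) := by
      rw [← Zsqrtd.norm_mul, ← hv]; exact hw
    rw [h3] at h4
    push_cast at h4
    exact mul_left_cancel₀ (by exact_mod_cast ha.ne') h4
  refine (Set.ncard_le_ncard hsub (((RG_fin a).prod (RG_fin b)).image _)).trans ?_
  refine (Set.ncard_image_le ((RG_fin a).prod (RG_fin b))).trans ?_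
  rw [Set.ncard_prod]

theorem RG_pp (p e : ℕ) (hp : p.Prime) : (RG (p ^ e)).ncard ≤ 9 * (e + 1) ^ 2 := by
  have hnu : ¬ IsUnit (p : GaussianInt) := by
    intro h
    have h2 := Zsqrtd.norm_eq_one_iff.2 h
    have h3 : ((p : GaussianInt)).norm = (p : ℤ) ^ 2 := by
      rw [RG_norm]; simp
    rw [h3] at h2
    have h4 : p ^ 2 = 1 := by
      rw [Int.natAbs_pow] at h2; simpa using h2
    have := hp.one_lt
    nlinarith
  have hn0 : (p : GaussianInt) ≠ 0 := by exact_mod_cast hp.ne_zero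
  obtain ⟨π, hirr, hdvd⟩ := WfDvdMonoid.exists_irreducible_factor hnu hn0
  have hpr : Prime π := hirr.prime
  have hpn : ¬ π.norm.natAbs = 1 := fun h => hirr.not_isUnit (Zsqrtd.norm_eq_one_iff.1 h)
  have key : ∀ e : ℕ, ∀ w : GaussianInt, w.norm.natAbs = p ^ e →
      ∃ u i j, u ∈ RG 1 ∧ i ≤ e ∧ j ≤ e ∧ w = u * (π ^ i * (star π) ^ j) := by
    intro e
    induction e using Nat.strong_induction_on with
    | _ e ih =>
    intro w hw
    rcases Nat.eq_zero_or_pos e with rfl | he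
    · refine ⟨w, 0, 0, ?_, le_rfl, le_rfl, by simp⟩
      have h0 : 0 ≤ w.norm := by rw [RG_norm]; positivity
      show w.norm = _
      simp at hw
      push_cast
      omega
    · have hpw : π ∣ w * star w := by
        rw [← Zsqrtd.norm_eq_mul_conj]
        have h0 : 0 ≤ w.norm := by rw [RG_norm]; positivity
        have : w.norm = (p : ℤ) ^ e := by
          have := Int.natAbs_of_nonneg h0
          rw [hw] at this; rw [← this]; push_cast; rfl
        rw [this]
        push_cast
        exact hdvd.trans (dvd_pow_self _ he.ne')
      have step : ∀ q : GaussianInt, q.norm.natAbs ≠ 1 → q ∣ w → ∃ w' e', w = q * w' ∧ e' < e ∧ w'.norm.natAbs = p ^ e' := by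
        rintro q hq ⟨w', hw'⟩
        have h1 : q.norm.natAbs * w'.norm.natAbs = p ^ e := by
          rw [← Int.natAbs_mul, ← Zsqrtd.norm_mul, ← hw', hw]
        obtain ⟨e', he', h2⟩ := (Nat.dvd_prime_pow hp).1 (Dvd.intro_left _ h1)
        refine ⟨w', e', hw', lt_of_le_of_ne he' ?_, h2⟩
        rintro rfl
        rw [h2] at h1
        have := Nat.pos_of_ne_zero (pow_ne_zero e' hp.ne_zero)
        exact hq (Nat.eq_of_mul_eq_mul_right this (by rw [h1, one_mul]))
      rcases hpr.dvd_or_dvd hpw with h | h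
      · obtain ⟨w', e', h1, h2, h3⟩ := step π hpn h
        obtain ⟨u, i, j, hu, hi, hj, hh⟩ := ih e' h2 w' h3
        exact ⟨u, i+1, j, hu, by omega, by omega, by rw [h1, hh]; ring⟩
      · have h' : star π ∣ w := by
          obtain ⟨z, hz⟩ := h
          exact ⟨star z, by rw [← star_star w, hz, star_mul, mul_comm]⟩
        obtain ⟨w', e', h1, h2, h3⟩ := step (star π) (by rwa [Zsqrtd.norm_conj]) h'
        obtain ⟨u, i, j, hu, hi, hj, hh⟩ := ih e' h2 w' h3
        exact ⟨u, i, j+1, hu, by omega, by omega, by rw [h1, hh]; ring⟩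
  have hsub : RG (p ^ e) ⊆ (fun x : GaussianInt × (ℕ × ℕ) => x.1 * (π ^ x.2.1 * (star π) ^ x.2.2)) ''
      (RG 1 ×ˢ ((Finset.range (e+1) ×ˢ Finset.range (e+1) : Finset (ℕ × ℕ)) : Set (ℕ × ℕ))) := by
    intro w hw
    have hw' : w.norm = ((p ^ e : ℕ) : ℤ) := hw
    obtain ⟨u, i, j, hu, hi, hj, hh⟩ := key e w (by rw [hw']; exact Int.natAbs_natCast _)
    refine ⟨(u, i, j), ⟨hu, ?_⟩, hh.symm⟩
    simp; omega
  have hf := (RG_fin 1).prod (Finset.finite_toSet (Finset.range (e+1) ×ˢ Finset.range (e+1)))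
  refine (Set.ncard_le_ncard hsub (hf.image _)).trans ?_
  refine (Set.ncard_image_le hf).trans ?_
  rw [Set.ncard_prod, Set.ncard_coe_finset, Finset.card_product, Finset.card_range, ← sq]
  exact Nat.mul_le_mul_right _ RG_one

theorem RG_bound (ε : ℝ) (hε : 0 < ε) : ∃ C : ℝ, 1 ≤ C ∧ ∀ k : ℕ, 0 < k →
    ((RG k).ncard : ℝ) ≤ C * (k : ℝ) ^ ε := by
  -- small primes constant
  obtain ⟨K, hK1, hK⟩ : ∃ K : ℝ, 1 ≤ K ∧ ∀ e : ℕ, (9 * (e + 1) ^ 2 : ℝ) ≤ K * ((2:ℝ) ^ ε) ^ e := by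
    have h2 : (1:ℝ) < 2 ^ ε := Real.one_lt_rpow (by norm_num) hε
    have ht : Filter.Tendsto (fun e : ℕ => ((e:ℝ) ^ 2 / ((2:ℝ)^ε) ^ e)) Filter.atTop (nhds 0) :=
      tendsto_pow_const_div_const_pow_of_one_lt 2 h2
    obtain ⟨B, hB⟩ := ht.bddAbove_range
    have hB' : ∀ e : ℕ, (e:ℝ)^2 ≤ B * ((2:ℝ)^ε)^e := by
      intro e
      have := hB ⟨e, rfl⟩
      simp only at this
      rwa [div_le_iff₀ (by positivity)] at this
    have hB0 : 0 ≤ B := by have := hB' 0; simpa using this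
    refine ⟨36 * B + 9, by linarith, fun e => ?_⟩
    have h1 := hB' e
    have h3 : (1:ℝ) ≤ ((2:ℝ)^ε)^e := one_le_pow₀ h2.le
    rcases Nat.eq_zero_or_pos e with rfl | he
    · norm_num; linarith
    · have : (1:ℝ) ≤ e := by exact_mod_cast he
      nlinarith
  obtain ⟨P, hP⟩ : ∃ P : ℕ, ∀ p : ℕ, P ≤ p → (36:ℝ) ≤ (p:ℝ) ^ ε := by
    have h : Filter.Tendsto (fun p : ℕ => (p:ℝ) ^ ε) Filter.atTop Filter.atTop :=
      (tendsto_rpow_atTop hε).comp tendsto_natCast_atTop_atTop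
    exact Filter.eventually_atTop.1 (h.eventually_ge_atTop 36)
  have key : ∀ k : ℕ, 1 < k → ((RG k).ncard : ℝ) ≤
      (∏ p ∈ k.primeFactors, if p < P then K else 1) * (k:ℝ)^ε := by
    intro k
    induction k using Nat.recOnPosPrimePosCoprime with
    | zero => intro h; omega
    | one => intro h; omega
    | prime_pow p n hp hn =>
      intro _
      have h1 : ((RG (p ^ n)).ncard : ℝ) ≤ 9 * (n + 1) ^ 2 := by exact_mod_cast RG_pp p n hp
      rw [Nat.primeFactors_prime_pow hn.ne' hp, Finset.prod_singleton]
      have h2 : ((p ^ n : ℕ) : ℝ) ^ ε = ((p : ℝ) ^ ε) ^ n := by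
        push_cast
        rw [← Real.rpow_natCast, ← Real.rpow_natCast, ← Real.rpow_mul (by positivity),
          ← Real.rpow_mul (by positivity), mul_comm]
      rw [h2]
      refine h1.trans ?_
      split_ifs with h
      · refine (hK n).trans ?_
        have : (2:ℝ) ≤ p := by exact_mod_cast hp.two_le
        gcongr
      · rw [one_mul]
        have h3 := hP p (by omega)
        have h4 : (9 * (n + 1) ^ 2 : ℝ) ≤ 36 ^ n := by
          have : ∀ n : ℕ, 9 * (n + 2) ^ 2 ≤ 36 ^ (n+1) := by
            intro n
            induction n with
            | zero => norm_num
            | succ n ih => rw [pow_succ 36 (n+1)]; ring_nf at ih ⊢; nlinarith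
          obtain ⟨j, rfl⟩ : ∃ j, n = j + 1 := ⟨n - 1, by omega⟩
          exact_mod_cast this j
        exact h4.trans (by gcongr)
    | coprime a b ha hb hab iha ihb =>
      intro _
      have h1 : ((RG (a * b)).ncard : ℝ) ≤ (RG a).ncard * (RG b).ncard := by
        exact_mod_cast RG_mul a b (by omega) hab
      rw [hab.primeFactors_mul, Finset.prod_union hab.disjoint_primeFactors]
      push_cast
      rw [Real.mul_rpow (by positivity) (by positivity)]
      refine h1.trans ?_
      have iha := iha ha
      have ihb := ihb hb
      calc _ ≤ _ := mul_le_mul iha ihb (by positivity) ((Nat.cast_nonneg _).trans iha)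
        _ = _ := by ring
  refine ⟨9 * K ^ P, ?_, fun k hk => ?_⟩
  · have : 1 ≤ K ^ P := one_le_pow₀ hK1
    linarith
  have hKP : 1 ≤ K ^ P := one_le_pow₀ hK1
  rcases Nat.lt_or_ge 1 k with h | h
  · refine (key k h).trans ?_
    have : (∏ p ∈ k.primeFactors, if p < P then K else 1) ≤ K ^ P := by
      rw [Finset.prod_ite, Finset.prod_const, Finset.prod_const_one, mul_one]
      refine pow_le_pow_right₀ hK1 ?_
      calc _ ≤ (Finset.range P).card := Finset.card_le_card (by
            intro x hx; simp at hx ⊢; exact hx.2)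
        _ = P := Finset.card_range P
    have h0 : 0 ≤ (k:ℝ)^ε := by positivity
    nlinarith
  · obtain rfl : k = 1 := by omega
    have : ((RG 1).ncard : ℝ) ≤ 9 := by exact_mod_cast RG_one
    simp
    linarith

/-- box of lattice points -/
noncomputable def bx (M : ℕ) : Finset (ℤ × ℤ) := Finset.Icc (-(M:ℤ)) M ×ˢ Finset.Icc (-(M:ℤ)) M

theorem mem_bx (M : ℕ) (x : ℤ × ℤ) : x ∈ bx M ↔ |x.1| ≤ M ∧ |x.2| ≤ M := by
  simp [bx, abs_le]

theorem bx_card (M : ℕ) (hM : 1 ≤ M) : ((bx M).card : ℝ) ≤ 9 * (M:ℝ) ^ 2 := by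
  have h : (bx M).card = (2 * M + 1) ^ 2 := by
    rw [bx, Finset.card_product, Int.card_Icc, sq]
    have : ((M:ℤ) + 1 - -(M:ℤ)).toNat = 2 * M + 1 := by omega
    rw [this]
  rw [h]
  have : (1:ℝ) ≤ M := by exact_mod_cast hM
  push_cast
  nlinarith

/-- counting integers in an interval within a residue class -/
theorem count_cong (c : ℤ) (M h : ℕ) (hh : 0 < h) (S : Finset ℤ)
    (hS : ∀ x ∈ S, |x - c| ≤ M) (hc : ∀ x ∈ S, ∀ y ∈ S, (h:ℤ) ∣ x - y) :
    (S.card : ℝ) ≤ 1 + 2 * M / h := by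
  rcases S.eq_empty_or_nonempty with rfl | hne
  · simp; positivity
  set a := S.min' hne with ha
  have haS : a ∈ S := S.min'_mem hne
  have h1 : S.card ≤ (Finset.range (2 * M / h + 1)).card := by
    apply Finset.card_le_card_of_injOn (fun x => ((x - a) / h).toNat)
    · intro x hx
      have hx : x ∈ S := hx
      have hle := S.min'_le x hx
      obtain ⟨q, hq⟩ := hc x hx a haS
      have e1 := abs_le.1 (hS x hx)
      have e2 := abs_le.1 (hS a haS)
      have h0 : (0:ℤ) < h := by exact_mod_cast hh
      simp only [Finset.coe_range, Set.mem_Iio]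
      rw [hq, Int.mul_ediv_cancel_left _ h0.ne']
      have hq0 : 0 ≤ q := by
        by_contra hcon
        have : (h:ℤ) * q < 0 := by nlinarith
        omega
      have h3 : q.toNat * h ≤ 2 * M := by
        zify
        rw [Int.toNat_of_nonneg hq0]
        nlinarith
      have := (Nat.le_div_iff_mul_le hh).2 h3
      omega
    · intro x hx y hy hxy
      have hx : x ∈ S := hx
      have hy : y ∈ S := hy
      simp only at hxy
      have l1 := S.min'_le x hx
      have l2 := S.min'_le y hy
      obtain ⟨q, hq⟩ := hc x hx a haS
      obtain ⟨r, hr⟩ := hc y hy a haS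
      have h0 : (0:ℤ) < h := by exact_mod_cast hh
      have p1 : 0 ≤ (x - a) / h := Int.ediv_nonneg (by omega) h0.le
      have p2 : 0 ≤ (y - a) / h := Int.ediv_nonneg (by omega) h0.le
      have h5 : (x - a) / h = (y - a) / h := by omega
      rw [hq, hr, Int.mul_ediv_cancel_left _ h0.ne', Int.mul_ediv_cancel_left _ h0.ne'] at h5
      subst h5
      omega
  rw [Finset.card_range] at h1
  have h2 : ((2 * M / h : ℕ) : ℝ) ≤ 2 * M / h := by
    have := @Nat.cast_div_le ℝ _ _ _ (2*M) h
    push_cast at this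
    exact this
  have h3 : (S.card : ℝ) ≤ ((2 * M / h : ℕ) : ℝ) + 1 := by exact_mod_cast h1
  linarith

/-- sup norm of the primitive vector -/
def hh (b : ℤ × ℤ) : ℕ := max b.1.natAbs b.2.natAbs / Int.gcd b.1 b.2

theorem hh_spec (b : ℤ × ℤ) (hb : b ≠ 0) : ∃ (g : ℕ) (v : ℤ × ℤ), 0 < g ∧ b.1 = g * v.1 ∧ b.2 = g * v.2 ∧
    IsCoprime v.1 v.2 ∧ hh b = max v.1.natAbs v.2.natAbs ∧ 0 < hh b := by
  have hg : 0 < Int.gcd b.1 b.2 := by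
    rw [Int.gcd_pos_iff]
    by_contra hcon
    push Not at hcon
    exact hb (Prod.ext hcon.1 hcon.2)
  obtain ⟨v1, v2, hc, h1, h2⟩ := Int.exists_gcd_one hg
  have e : hh b = max v1.natAbs v2.natAbs := by
    unfold hh
    set g := Int.gcd b.1 b.2
    rw [h1, h2, Int.natAbs_mul, Int.natAbs_mul, Int.natAbs_natCast, ← max_mul_of_nonneg _ _ (Nat.zero_le g),
      Nat.mul_div_cancel _ hg]
  refine ⟨Int.gcd b.1 b.2, (v1, v2), hg, by rw [mul_comm]; exact h1, by rw [mul_comm]; exact h2, Int.isCoprime_iff_gcd_eq_one.2 hc, e, ?_⟩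
  rw [e]
  by_contra hcon
  have z1 : v1 = 0 := by omega
  have z2 : v2 = 0 := by omega
  subst z1; subst z2
  simp at hc

theorem line_count (b : ℤ × ℤ) (hb : b ≠ 0) (M : ℕ) (S : Finset (ℤ × ℤ)) (hS : ∀ x ∈ S, x ∈ bx M)
    (hl : ∀ x ∈ S, ∀ y ∈ S, (x.1 - y.1) * b.1 + (x.2 - y.2) * b.2 = 0) :
    (S.card : ℝ) ≤ 1 + 2 * M / (hh b) := by
  obtain ⟨g, v, hg, h1, h2, hcop, hv, hpos⟩ := hh_spec b hb
  have hl' : ∀ x ∈ S, ∀ y ∈ S, (x.1 - y.1) * v.1 + (x.2 - y.2) * v.2 = 0 := by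
    intro x hx y hy
    have := hl x hx y hy
    rw [h1, h2] at this
    have hg' : (g:ℤ) ≠ 0 := by exact_mod_cast hg.ne'
    apply mul_left_cancel₀ hg'
    linear_combination this
  rcases le_total v.1.natAbs v.2.natAbs with hle | hle
  · -- second coordinate dominant
    rw [max_eq_right hle] at hv
    have hv0 : v.2 ≠ 0 := by omega
    have hinj : Set.InjOn (Prod.fst : ℤ × ℤ → ℤ) S := by
      intro x hx y hy hxy
      have := hl' x hx y hy
      rw [hxy] at this
      have : x.2 - y.2 = 0 := by
        rcases mul_eq_zero.1 (show (x.2 - y.2) * v.2 = 0 by linarith) with h | h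
        · exact h
        · exact absurd h hv0
      exact Prod.ext hxy (by omega)
    rw [← Finset.card_image_of_injOn hinj]
    apply count_cong 0 M (hh b) hpos
    · intro x hx
      obtain ⟨y, hy', rfl⟩ := Finset.mem_image.1 hx
      simpa using ((mem_bx M y).1 (hS y hy')).1
    · intro x hx y hy
      obtain ⟨x, hx', rfl⟩ := Finset.mem_image.1 hx
      obtain ⟨y, hy', rfl⟩ := Finset.mem_image.1 hy
      rw [hv, Int.natAbs_dvd]
      apply hcop.symm.dvd_of_dvd_mul_right
      exact ⟨-(x.2 - y.2), by linear_combination hl' x hx' y hy'⟩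
  · rw [max_eq_left hle] at hv
    have hv0 : v.1 ≠ 0 := by omega
    have hinj : Set.InjOn (Prod.snd : ℤ × ℤ → ℤ) S := by
      intro x hx y hy hxy
      have := hl' x hx y hy
      rw [hxy] at this
      have : x.1 - y.1 = 0 := by
        rcases mul_eq_zero.1 (show (x.1 - y.1) * v.1 = 0 by linarith) with h | h
        · exact h
        · exact absurd h hv0
      exact Prod.ext (by omega) hxy
    rw [← Finset.card_image_of_injOn hinj]
    apply count_cong 0 M (hh b) hpos
    · intro x hx
      obtain ⟨y, hy', rfl⟩ := Finset.mem_image.1 hx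
      simpa using ((mem_bx M y).1 (hS y hy')).2
    · intro x hx y hy
      obtain ⟨x, hx', rfl⟩ := Finset.mem_image.1 hx
      obtain ⟨y, hy', rfl⟩ := Finset.mem_image.1 hy
      rw [hv, Int.natAbs_dvd]
      apply hcop.dvd_of_dvd_mul_right
      exact ⟨-(x.1 - y.1), by linear_combination hl' x hx' y hy'⟩

theorem Ah_aux (N h : ℕ) (hh0 : 0 < h) (hN : h ≤ N) (c : ℤ) (S : Finset (ℤ × ℤ))
    (hS : ∀ b ∈ S, |b.1 - c| ≤ N ∧ ∃ (g : ℕ) (v : ℤ × ℤ), b.1 = g * v.1 ∧ b.2 = g * v.2 ∧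
      v.1.natAbs = h ∧ v.2.natAbs ≤ h) : (S.card : ℝ) ≤ 9 * N := by
  set I : Finset ℤ := (Finset.Icc (c - N) (c + N)).filter (fun x => (h:ℤ) ∣ x) with hI
  have hIc : (I.card : ℝ) ≤ 1 + 2 * N / h := by
    apply count_cong c N h hh0
    · intro x hx
      simp [hI] at hx
      rw [abs_le]; omega
    · intro x hx y hy
      exact dvd_sub (Finset.mem_filter.1 hx).2 (Finset.mem_filter.1 hy).2
  have hsub : S ⊆ (I ×ˢ Finset.Icc (-(h:ℤ)) h).image (fun x => (x.1, |x.1| / h * x.2)) := by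
    intro b hb
    obtain ⟨hc, g, v, h1, h2, h3, h4⟩ := hS b hb
    rw [Finset.mem_image]
    refine ⟨(b.1, v.2), ?_, ?_⟩
    · rw [Finset.mem_product, hI, Finset.mem_filter, Finset.mem_Icc, Finset.mem_Icc]
      have := abs_le.1 hc
      refine ⟨⟨⟨by omega, by omega⟩, ?_⟩, by dsimp only; omega, by dsimp only; omega⟩
      dsimp only
      rw [h1, ← h3, Int.natAbs_dvd]
      exact dvd_mul_left _ _
    · refine Prod.ext rfl ?_
      dsimp only
      rw [h2]
      congr 1
      rw [h1, abs_mul, Int.abs_eq_natAbs v.1, h3, Int.mul_ediv_cancel _ (by omega)]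
      simp
  have h1 := (Finset.card_le_card hsub).trans Finset.card_image_le
  rw [Finset.card_product, Int.card_Icc] at h1
  have h2 : ((h:ℤ) + 1 - -(h:ℤ)).toNat = 2 * h + 1 := by omega
  rw [h2] at h1
  have h3 : (S.card : ℝ) ≤ I.card * (2 * h + 1) := by exact_mod_cast h1
  have p1 : (1:ℝ) ≤ h := by exact_mod_cast hh0
  have p2 : (h:ℝ) ≤ N := by exact_mod_cast hN
  calc (S.card : ℝ) ≤ I.card * (2 * h + 1) := h3
    _ ≤ (1 + 2 * N / h) * (3 * h) := by
      apply mul_le_mul hIc (by linarith) (by positivity) (by positivity)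
    _ = 3 * h + 6 * N := by field_simp; ring
    _ ≤ 9 * N := by linarith

theorem Ah (N h : ℕ) (hh0 : 0 < h) (hN : h ≤ N) (c : ℤ × ℤ) (S : Finset (ℤ × ℤ))
    (hS : ∀ n ∈ S, n ∈ bx N ∧ n ≠ c ∧ hh (n - c) = h) : (S.card : ℝ) ≤ 18 * N := by
  set S1 := S.filter (fun n => (n.2 - c.2).natAbs ≤ (n.1 - c.1).natAbs)
  set S2 := S.filter (fun n => ¬ (n.2 - c.2).natAbs ≤ (n.1 - c.1).natAbs)
  have hcard : S1.card + S2.card = S.card := Finset.card_filter_add_card_filter_not _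
  have b1 : (S1.card : ℝ) ≤ 9 * N := by
    have hinj : Function.Injective (fun n : ℤ × ℤ => n - c) := sub_left_injective
    rw [← Finset.card_image_of_injective S1 hinj]
    apply Ah_aux N h hh0 hN (-c.1)
    intro b hb
    obtain ⟨n, hn, rfl⟩ := Finset.mem_image.1 hb
    obtain ⟨hnS, hle⟩ := Finset.mem_filter.1 hn
    obtain ⟨q1, q2, q3⟩ := hS n hnS
    refine ⟨by simpa using ((mem_bx N n).1 q1).1, ?_⟩
    obtain ⟨g, v, hg, e1, e2, -, e3, -⟩ := hh_spec (n - c) (sub_ne_zero.2 q2)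
    have : v.2.natAbs ≤ v.1.natAbs := by
      have : (g * v.2).natAbs ≤ (g * v.1).natAbs := by rw [← e1, ← e2]; exact hle
      rw [Int.natAbs_mul, Int.natAbs_mul, Int.natAbs_natCast] at this
      exact Nat.le_of_mul_le_mul_left this hg
    rw [max_eq_left this, q3] at e3
    exact ⟨g, v, e1, e2, e3.symm, by omega⟩
  have b2 : (S2.card : ℝ) ≤ 9 * N := by
    have hinj : Function.Injective (fun n : ℤ × ℤ => (n - c).swap) :=
      Prod.swap_injective.comp sub_left_injective
    rw [← Finset.card_image_of_injective S2 hinj]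
    apply Ah_aux N h hh0 hN (-c.2)
    intro b hb
    obtain ⟨n, hn, rfl⟩ := Finset.mem_image.1 hb
    obtain ⟨hnS, hle⟩ := Finset.mem_filter.1 hn
    obtain ⟨q1, q2, q3⟩ := hS n hnS
    refine ⟨by simpa using ((mem_bx N n).1 q1).2, ?_⟩
    obtain ⟨g, v, hg, e1, e2, -, e3, -⟩ := hh_spec (n - c) (sub_ne_zero.2 q2)
    have : v.1.natAbs ≤ v.2.natAbs := by
      have : (g * v.1).natAbs ≤ (g * v.2).natAbs := by rw [← e1, ← e2]; exact (not_le.1 hle).le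
      rw [Int.natAbs_mul, Int.natAbs_mul, Int.natAbs_natCast] at this
      exact Nat.le_of_mul_le_mul_left this hg
    rw [max_eq_right this, q3] at e3
    exact ⟨g, v.swap, e2, e1, e3.symm, by simp; omega⟩
  have : (S.card : ℝ) = S1.card + S2.card := by exact_mod_cast hcard.symm
  linarith

theorem sum_hh (N : ℕ) (hN : 1 ≤ N) (c : ℤ × ℤ) :
    ∑ n ∈ (bx N).erase c, (1:ℝ) / hh (n - c) ≤ 27 * N * (1 + Real.log N) := by
  have hN' : (1:ℝ) ≤ N := by exact_mod_cast hN
  rw [← Finset.sum_filter_add_sum_filter_not _ (fun n => hh (n - c) ≤ N)]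
  have b1 : ∑ n ∈ ((bx N).erase c).filter (fun n => hh (n - c) ≤ N), (1:ℝ) / hh (n - c) ≤
      18 * N * (1 + Real.log N) := by
    rw [← Finset.sum_fiberwise_of_maps_to (t := Finset.Icc 1 N) (g := fun n => hh (n - c))]
    · have : ∀ h ∈ Finset.Icc 1 N, ∑ n ∈ (((bx N).erase c).filter (fun n => hh (n - c) ≤ N)).filter
          (fun n => hh (n - c) = h), (1:ℝ) / hh (n - c) ≤ 18 * N * ((h:ℝ)⁻¹) := by
        intro h hm
        rw [Finset.mem_Icc] at hm
        rw [Finset.sum_congr rfl (g := fun _ => ((h:ℝ)⁻¹)) (by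
          intro n hn
          rw [(Finset.mem_filter.1 hn).2, one_div]), Finset.sum_const, nsmul_eq_mul]
        gcongr
        apply Ah N h (by omega) hm.2 c
        intro n hn
        simp only [Finset.mem_filter, Finset.mem_erase] at hn
        exact ⟨hn.1.1.2, hn.1.1.1, hn.2⟩
      refine (Finset.sum_le_sum this).trans ?_
      rw [← Finset.mul_sum]
      gcongr
      have hh := harmonic_le_one_add_log N
      rw [harmonic_eq_sum_Icc] at hh
      push_cast at hh
      exact hh
    · intro n hn
      simp only [Finset.mem_filter, Finset.mem_erase] at hn
      obtain ⟨_, _, _, _, _, _, _, hp⟩ := hh_spec (n - c) (sub_ne_zero.2 hn.1.1)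
      rw [Finset.mem_Icc]; omega
  have b2 : ∑ n ∈ ((bx N).erase c).filter (fun n => ¬ hh (n - c) ≤ N), (1:ℝ) / hh (n - c) ≤ 9 * N := by
    have : ∀ n ∈ ((bx N).erase c).filter (fun n => ¬ hh (n - c) ≤ N), (1:ℝ) / hh (n - c) ≤ 1 / N := by
      intro n hn
      have h := (Finset.mem_filter.1 hn).2
      have : (N:ℝ) ≤ hh (n - c) := by exact_mod_cast (not_le.1 h).le
      gcongr
    refine (Finset.sum_le_card_nsmul _ _ _ this).trans ?_
    rw [nsmul_eq_mul]
    have hc : ((((bx N).erase c).filter (fun n => ¬ hh (n - c) ≤ N)).card : ℝ) ≤ 9 * (N:ℝ)^2 := by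
      refine le_trans ?_ (bx_card N hN)
      exact_mod_cast Finset.card_le_card ((Finset.filter_subset _ _).trans (Finset.erase_subset _ _))
    calc _ ≤ 9 * (N:ℝ)^2 * (1 / N) := by gcongr
      _ = 9 * N := by field_simp
  have hl : 0 ≤ Real.log N := Real.log_nonneg hN'
  nlinarith [mul_nonneg (by linarith : (0:ℝ) ≤ N) hl]

theorem three_pts (N : ℤ) (hN : 0 ≤ N) (q1 q2 u1 u2 v1 v2 : ℤ)
    (hu1 : |u1| ≤ 2 * N) (hu2 : |u2| ≤ 2 * N) (hv1 : |v1| ≤ 2 * N) (hv2 : |v2| ≤ 2 * N)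
    (hu : q1 * u1 + q2 * u2 = -(u1 ^ 2 + u2 ^ 2)) (hv : q1 * v1 + q2 * v2 = -(v1 ^ 2 + v2 ^ 2))
    (u0 : ¬ (u1 = 0 ∧ u2 = 0)) (v0 : ¬ (v1 = 0 ∧ v2 = 0)) (huv : ¬ (u1 = v1 ∧ u2 = v2)) :
    q1 ^ 2 + q2 ^ 2 ≤ 2048 * N ^ 6 := by
  have e1 : (u1 * v2 - u2 * v1) * q1 = -(u1 ^ 2 + u2 ^ 2) * v2 + (v1 ^ 2 + v2 ^ 2) * u2 := by
    linear_combination v2 * hu - u2 * hv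
  have e2 : (u1 * v2 - u2 * v1) * q2 = (u1 ^ 2 + u2 ^ 2) * v1 - (v1 ^ 2 + v2 ^ 2) * u1 := by
    linear_combination -v1 * hu + u1 * hv
  have hU : 0 < u1 ^ 2 + u2 ^ 2 := by
    by_contra hcon
    exact u0 ⟨by nlinarith [sq_nonneg u1, sq_nonneg u2], by nlinarith [sq_nonneg u1, sq_nonneg u2]⟩
  have hV : 0 < v1 ^ 2 + v2 ^ 2 := by
    by_contra hcon
    exact v0 ⟨by nlinarith [sq_nonneg v1, sq_nonneg v2], by nlinarith [sq_nonneg v1, sq_nonneg v2]⟩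
  have hD : u1 * v2 - u2 * v1 ≠ 0 := by
    intro hD
    rw [hD, zero_mul] at e1 e2
    have h3 : (u1 ^ 2 + u2 ^ 2) * (v1 ^ 2 + v2 ^ 2) * ((u1 ^ 2 + u2 ^ 2) - (v1 ^ 2 + v2 ^ 2)) = 0 := by
      set U := u1 ^ 2 + u2 ^ 2
      set V := v1 ^ 2 + v2 ^ 2
      have a1 : U * v2 = V * u2 := by linarith
      have a2 : U * v1 = V * u1 := by linarith
      have b : U * U * V = V * V * U := by
        calc U * U * V = (U * v1) * (U * v1) + (U * v2) * (U * v2) := by simp only [V]; ring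
          _ = (V * u1) * (V * u1) + (V * u2) * (V * u2) := by rw [a1, a2]
          _ = V * V * U := by simp only [U]; ring
      linear_combination b
    have h4 : u1 ^ 2 + u2 ^ 2 = v1 ^ 2 + v2 ^ 2 := by
      rcases mul_eq_zero.1 h3 with h | h
      · exact absurd h (mul_pos hU hV).ne'
      · linarith
    rw [h4] at e1 e2
    apply huv
    constructor
    · apply mul_left_cancel₀ hV.ne'; linarith
    · apply mul_left_cancel₀ hV.ne'; linarith
  have hD1 : 1 ≤ |u1 * v2 - u2 * v1| := Int.one_le_abs hD
  have sqb : ∀ x : ℤ, |x| ≤ 2 * N → x ^ 2 ≤ 4 * N ^ 2 := by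
    intro x hx
    have := abs_le.1 hx
    nlinarith
  have mb : ∀ A x : ℤ, 0 ≤ A → A ≤ 8 * N ^ 2 → |x| ≤ 2 * N → |A * x| ≤ 16 * N ^ 3 := by
    intro A x hA hA' hx
    rw [abs_mul, abs_of_nonneg hA]
    calc A * |x| ≤ (8 * N ^ 2) * (2 * N) := mul_le_mul hA' hx (abs_nonneg _) (by positivity)
      _ = _ := by ring
  have hU8 : u1 ^ 2 + u2 ^ 2 ≤ 8 * N ^ 2 := by linarith [sqb _ hu1, sqb _ hu2]
  have hV8 : v1 ^ 2 + v2 ^ 2 ≤ 8 * N ^ 2 := by linarith [sqb _ hv1, sqb _ hv2]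
  have f1 : |q1| ≤ 32 * N ^ 3 := by
    have h : |(u1 * v2 - u2 * v1) * q1| ≤ 32 * N ^ 3 := by
      rw [e1, abs_le]
      have t1 := abs_le.1 (mb _ _ hU.le hU8 hv2)
      have t2 := abs_le.1 (mb _ _ hV.le hV8 hu2)
      constructor <;> linarith [t1.1, t1.2, t2.1, t2.2]
    rw [abs_mul] at h
    nlinarith [abs_nonneg q1]
  have f2 : |q2| ≤ 32 * N ^ 3 := by
    have h : |(u1 * v2 - u2 * v1) * q2| ≤ 32 * N ^ 3 := by
      rw [e2, abs_le]
      have t1 := abs_le.1 (mb _ _ hU.le hU8 hv1)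
      have t2 := abs_le.1 (mb _ _ hV.le hV8 hu1)
      constructor <;> linarith [t1.1, t1.2, t2.1, t2.2]
    rw [abs_mul] at h
    nlinarith [abs_nonneg q2]
  have g1 : q1 ^ 2 ≤ (32 * N ^ 3) ^ 2 := sq_le_sq' (abs_le.1 f1).1 (abs_le.1 f1).2
  have g2 : q2 ^ 2 ≤ (32 * N ^ 3) ^ 2 := sq_le_sq' (abs_le.1 f2).1 (abs_le.1 f2).2
  calc _ ≤ (32 * N ^ 3) ^ 2 + (32 * N ^ 3) ^ 2 := by linarith
    _ = _ := by ring

theorem circ_count (ε : ℝ) (hε : 0 < ε) : ∃ C : ℝ, 1 ≤ C ∧ ∀ (N : ℕ), 1 ≤ N →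
    ∀ (n₁ n₃ : ℤ × ℤ) (m : ℤ) (S : Finset (ℤ × ℤ)), (∀ x ∈ S, x ∈ bx N) →
    (∀ x ∈ S, 2 * ((x.1 - n₁.1) * (x.1 - n₃.1) + (x.2 - n₁.2) * (x.2 - n₃.2)) = m) →
    (S.card : ℝ) ≤ C * (N:ℝ) ^ ε := by
  obtain ⟨C, hC, hR⟩ := RG_bound (ε / 6) (by positivity)
  have h2048 : (1:ℝ) ≤ (2048:ℝ) ^ (ε / 6) := Real.one_le_rpow (by norm_num) (by positivity)
  refine ⟨2 * (C * (2048:ℝ) ^ (ε / 6)), by nlinarith, ?_⟩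
  intro N hN n₁ n₃ m S hS hm
  have hN' : (1:ℝ) ≤ N := by exact_mod_cast hN
  have hNe : (1:ℝ) ≤ (N:ℝ) ^ ε := Real.one_le_rpow hN' hε.le
  have hCC : 1 ≤ C * (2048:ℝ) ^ (ε / 6) := by nlinarith
  rcases Nat.lt_or_ge 2 S.card with h2 | h2
  swap
  · have : (S.card : ℝ) ≤ 2 := by exact_mod_cast h2
    nlinarith
  set K : ℤ := 2 * m + (n₁.1 - n₃.1) ^ 2 + (n₁.2 - n₃.2) ^ 2 with hK
  have hq : ∀ x ∈ S, (2 * x.1 - n₁.1 - n₃.1) ^ 2 + (2 * x.2 - n₁.2 - n₃.2) ^ 2 = K := by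
    intro x hx
    rw [hK, ← hm x hx]; ring
  obtain ⟨a, ha, b, hb, c, hc, hab, hac, hbc⟩ := Finset.two_lt_card.1 h2
  have hKle : K ≤ 2048 * (N:ℤ) ^ 6 := by
    rw [← hq a ha]
    have A := (mem_bx N a).1 (hS a ha)
    have B := (mem_bx N b).1 (hS b hb)
    have Cc := (mem_bx N c).1 (hS c hc)
    simp only [abs_le] at A B Cc
    have qa := hq a ha
    have qb := hq b hb
    have qc := hq c hc
    apply three_pts N (by positivity) _ _ (b.1 - a.1) (b.2 - a.2) (c.1 - a.1) (c.2 - a.2)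
    · rw [abs_le]; omega
    · rw [abs_le]; omega
    · rw [abs_le]; omega
    · rw [abs_le]; omega
    · apply mul_left_cancel₀ (show (4:ℤ) ≠ 0 by norm_num); linear_combination qb - qa
    · apply mul_left_cancel₀ (show (4:ℤ) ≠ 0 by norm_num); linear_combination qc - qa
    · rintro ⟨h1, h2⟩; exact hab (Prod.ext (by omega) (by omega))
    · rintro ⟨h1, h2⟩; exact hac (Prod.ext (by omega) (by omega))
    · rintro ⟨h1, h2⟩; exact hbc (Prod.ext (by omega) (by omega))
  have hK0 : 0 < K := by
    by_contra hcon
    have qa := hq a ha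
    have qb := hq b hb
    have z : ∀ s t : ℤ, s ^ 2 + t ^ 2 = K → s = 0 ∧ t = 0 := by
      intro s t h
      exact ⟨by nlinarith [sq_nonneg s, sq_nonneg t], by nlinarith [sq_nonneg s, sq_nonneg t]⟩
    have za := z _ _ qa
    have zb := z _ _ qb
    exact hab (Prod.ext (by omega) (by omega))
  have hKn : ((K.toNat : ℕ) : ℤ) = K := Int.toNat_of_nonneg hK0.le
  have h3 : S.card ≤ (RG K.toNat).ncard := by
    rw [← Set.ncard_coe_finset]
    apply Set.ncard_le_ncard_of_injOn (fun x : ℤ × ℤ => (⟨2 * x.1 - n₁.1 - n₃.1, 2 * x.2 - n₁.2 - n₃.2⟩ : GaussianInt)) _ _ (RG_fin _)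
    · intro x hx
      show Zsqrtd.norm _ = _
      rw [RG_norm, hKn]
      exact hq x hx
    · intro x _ y _ hxy
      simp only [Zsqrtd.mk.injEq] at hxy
      exact Prod.ext (by omega) (by omega)
  have h4 : (S.card : ℝ) ≤ (RG K.toNat).ncard := by exact_mod_cast h3
  have h5 := hR K.toNat (by omega)
  have h6 : ((K.toNat : ℕ) : ℝ) ≤ 2048 * (N:ℝ) ^ 6 := by
    have : ((K.toNat : ℕ) : ℤ) ≤ 2048 * (N:ℤ) ^ 6 := by rw [hKn]; exact hKle
    exact_mod_cast this
  have h7 : ((K.toNat : ℕ) : ℝ) ^ (ε / 6) ≤ (2048:ℝ) ^ (ε / 6) * (N:ℝ) ^ ε := by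
    calc _ ≤ (2048 * (N:ℝ) ^ 6) ^ (ε / 6) := by gcongr
      _ = (2048:ℝ) ^ (ε / 6) * ((N:ℝ) ^ 6) ^ (ε / 6) := Real.mul_rpow (by positivity) (by positivity)
      _ = _ := by
        congr 1
        rw [← Real.rpow_natCast, ← Real.rpow_mul (by positivity)]
        congr 1
        push_cast; ring
  calc (S.card : ℝ) ≤ C * ((K.toNat : ℕ) : ℝ) ^ (ε / 6) := h4.trans h5
    _ ≤ C * ((2048:ℝ) ^ (ε / 6) * (N:ℝ) ^ ε) := by gcongr
    _ ≤ _ := by nlinarith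

theorem count_gen {X : Type*} (T : Set X) (f g : X → ℤ × ℤ)
    (hinj : ∀ s ∈ T, ∀ t ∈ T, f s = f t → g s = g t → s = t)
    (A : Finset (ℤ × ℤ)) (F : ℤ × ℤ → Finset (ℤ × ℤ)) (hA : ∀ t ∈ T, f t ∈ A)
    (hF : ∀ t ∈ T, g t ∈ F (f t)) (c : ℤ × ℤ → ℝ) (hc : ∀ a ∈ A, ((F a).card : ℝ) ≤ c a) :
    (T.ncard : ℝ) ≤ ∑ a ∈ A, c a := by
  have h1 : T.ncard ≤ (A.sigma F).card := by
    rw [← Set.ncard_coe_finset]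
    apply Set.ncard_le_ncard_of_injOn (fun t => (⟨f t, g t⟩ : Σ _ : ℤ × ℤ, ℤ × ℤ)) _ _ (Finset.finite_toSet _)
    · intro t ht
      simp only [Finset.coe_sigma, Set.mem_sigma_iff, Finset.mem_coe]
      exact ⟨hA t ht, hF t ht⟩
    · intro s hs t ht hst
      simp only [Sigma.mk.injEq, heq_eq_eq] at hst
      exact hinj s hs t ht hst.1 hst.2
  rw [Finset.card_sigma] at h1
  refine le_trans (by exact_mod_cast h1) (Finset.sum_le_sum hc)

def TS (N N₁ N₂ : ℕ) (m : ℤ) (n₃ : ℤ × ℤ) : Set ((ℤ × ℤ) × (ℤ × ℤ) × (ℤ × ℤ)) :=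
  {t | t.1 = t.2.1 - t.2.2 + n₃ ∧ t.1 ≠ t.2.1 ∧ t.1 ≠ n₃ ∧ phiFn t.1 t.2.1 t.2.2 n₃ = m ∧
    t.1 ∈ bx N ∧ t.2.1 ∈ bx N₁ ∧ t.2.2 ∈ bx N₂}

theorem TS_fin (N N₁ N₂ : ℕ) (m : ℤ) (n₃ : ℤ × ℤ) : (TS N N₁ N₂ m n₃).Finite := by
  apply (Finset.finite_toSet (bx N ×ˢ (bx N₁ ×ˢ bx N₂))).subset
  rintro t ⟨-, -, -, -, h1, h2, h3⟩
  simp only [Finset.coe_product, Set.mem_prod, Finset.mem_coe]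
  exact ⟨h1, h2, h3⟩

theorem TS_symm (N N₁ N₂ : ℕ) (m : ℤ) (n₃ : ℤ × ℤ) :
    (TS N N₁ N₂ m n₃).ncard ≤ (TS N₂ N₁ N m n₃).ncard := by
  apply Set.ncard_le_ncard_of_injOn (fun t => (t.2.2, t.2.1, t.1)) _ _ (TS_fin _ _ _ _ _)
  · rintro ⟨n, n1, n2⟩ ⟨h1, h2, h3, h4, h5, h6, h7⟩
    dsimp only at *
    refine ⟨?_, ?_, ?_, ?_, h7, h6, h5⟩
    · dsimp only; rw [h1]; abel
    · dsimp only; rintro rfl; apply h3; rw [h1]; abel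
    · dsimp only; rintro rfl; apply h2; rw [h1]; abel
    · rw [← h4]; simp only [phiFn]; ring
  · rintro ⟨n, n1, n2⟩ _ ⟨k, k1, k2⟩ _ h
    simp only [Prod.mk.injEq] at h ⊢
    exact ⟨h.2.2, h.2.1, h.1⟩

theorem phi_eq (n n₁ n₂ n₃ : ℤ × ℤ) (m : ℤ) (h : n = n₁ - n₂ + n₃) (hm : phiFn n n₁ n₂ n₃ = m) :
    2 * ((n.1 - n₁.1) * (n.1 - n₃.1) + (n.2 - n₁.2) * (n.2 - n₃.2)) = m := by
  have h1 : n.1 = n₁.1 - n₂.1 + n₃.1 := by rw [h]; rfl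
  have h2 : n.2 = n₁.2 - n₂.2 + n₃.2 := by rw [h]; rfl
  rw [← hm]
  simp only [phiFn, nsq]
  rw [h1, h2]; ring

theorem boundA (ε : ℝ) (hε : 0 < ε) : ∃ C : ℝ, 1 ≤ C ∧ ∀ N N₁ N₂ : ℕ, 1 ≤ N → 1 ≤ N₁ →
    ∀ m n₃, ((TS N N₁ N₂ m n₃).ncard : ℝ) ≤ C * ((N₁:ℝ) ^ 2 * (N:ℝ) ^ ε) := by
  obtain ⟨C, hC, h⟩ := circ_count ε hε
  refine ⟨9 * C, by linarith, fun N N₁ N₂ hN hN₁ m n₃ => ?_⟩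
  have := count_gen (TS N N₁ N₂ m n₃) (fun t => t.2.1) (fun t => t.1)
    (by
      rintro ⟨n, n1, n2⟩ ⟨h1, -⟩ ⟨k, k1, k2⟩ ⟨h2, -⟩ e1 e2
      dsimp only at *
      subst e1 e2
      rw [h1] at h2
      have : n2 = k2 := by simpa using h2
      rw [this]) (bx N₁)
    (fun a => (bx N).filter (fun x => 2 * ((x.1 - a.1) * (x.1 - n₃.1) + (x.2 - a.2) * (x.2 - n₃.2)) = m))
    (fun t ht => ht.2.2.2.2.2.1)
    (fun t ht => Finset.mem_filter.2 ⟨ht.2.2.2.2.1, phi_eq _ _ _ _ _ ht.1 ht.2.2.2.1⟩)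
    (fun _ => C * (N:ℝ) ^ ε)
    (fun a _ => h N hN a n₃ m _ (fun x hx => (Finset.mem_filter.1 hx).1)
      (fun x hx => (Finset.mem_filter.1 hx).2))
  refine this.trans ?_
  rw [Finset.sum_const, nsmul_eq_mul]
  have h9 := bx_card N₁ hN₁
  calc _ ≤ 9 * (N₁:ℝ)^2 * (C * (N:ℝ) ^ ε) := by gcongr
    _ = _ := by ring

/-- summing the line bound -/
theorem line_sum (ε : ℝ) (hε : 0 < ε) : ∃ C : ℝ, 1 ≤ C ∧ ∀ N M : ℕ, 1 ≤ N → N ≤ M → ∀ n₃,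
    ∑ n ∈ (bx N).erase n₃, (1 + 2 * (M:ℝ) / hh (n - n₃)) ≤ C * ((N:ℝ) * M) ^ (1 + ε) := by
  refine ⟨9 + 54 * (1 + 1 / ε), by have : 0 < 1 / ε := by positivity
                                   linarith, fun N M hN hNM n₃ => ?_⟩
  have hN' : (1:ℝ) ≤ N := by exact_mod_cast hN
  have hM' : (N:ℝ) ≤ M := by exact_mod_cast hNM
  have hs := sum_hh N hN n₃
  have e : ∑ n ∈ (bx N).erase n₃, (1 + 2 * (M:ℝ) / hh (n - n₃)) =
      ((bx N).erase n₃).card + 2 * M * ∑ n ∈ (bx N).erase n₃, (1:ℝ) / hh (n - n₃) := by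
    rw [Finset.sum_add_distrib, Finset.mul_sum]
    congr 1
    · simp
    · apply Finset.sum_congr rfl; intros; ring
  rw [e]
  have hc : (((bx N).erase n₃).card : ℝ) ≤ 9 * (N:ℝ)^2 := by
    refine le_trans ?_ (bx_card N hN)
    exact_mod_cast Finset.card_le_card (Finset.erase_subset _ _)
  have hlog : Real.log N ≤ (N:ℝ) ^ ε / ε := Real.log_le_rpow_div (by positivity) hε
  have hNM1 : (1:ℝ) ≤ N * M := by nlinarith
  have hpow : ((N:ℝ) * M) ^ (1 + ε) = (N * M) * ((N:ℝ) * M) ^ ε := by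
    rw [Real.rpow_add (by linarith), Real.rpow_one]
  have hp1 : (1:ℝ) ≤ ((N:ℝ) * M) ^ ε := Real.one_le_rpow hNM1 hε.le
  have hp2 : (N:ℝ) ^ ε ≤ ((N:ℝ) * M) ^ ε := by
    apply Real.rpow_le_rpow (by positivity) _ hε.le
    nlinarith
  set P := ((N:ℝ) * M) ^ ε
  have hlog2 : 1 + Real.log N ≤ (1 + 1 / ε) * P := by
    have : (N:ℝ) ^ ε / ε ≤ P / ε := by gcongr
    have : P / ε = 1 / ε * P := by ring
    linarith
  rw [hpow]
  have hM0 : (0:ℝ) ≤ M := by linarith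
  calc _ ≤ 9 * (N:ℝ)^2 + 2 * M * (27 * N * ((1 + 1 / ε) * P)) := by
        have : 27 * (N:ℝ) * (1 + Real.log N) ≤ 27 * N * ((1 + 1 / ε) * P) := by gcongr
        gcongr
        linarith
    _ ≤ 9 * (N * M * P) + 2 * M * (27 * N * ((1 + 1 / ε) * P)) := by
        have : (N:ℝ)^2 ≤ N * M := by nlinarith
        have : (N:ℝ) * M ≤ N * M * P := le_mul_of_one_le_right (by linarith) hp1
        linarith
    _ = _ := by ring

theorem boundB (ε : ℝ) (hε : 0 < ε) : ∃ C : ℝ, 1 ≤ C ∧ ∀ N N₁ N₂ : ℕ, 1 ≤ N → 1 ≤ N₁ →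
    ∀ m n₃, ((TS N N₁ N₂ m n₃).ncard : ℝ) ≤ C * ((N:ℝ) * N₁) ^ (1 + ε) := by
  obtain ⟨C, hC, h⟩ := boundA ε hε
  obtain ⟨C', hC', h'⟩ := line_sum ε hε
  refine ⟨C + C', by linarith, fun N N₁ N₂ hN hN₁ m n₃ => ?_⟩
  have a1 : (1:ℝ) ≤ N := by exact_mod_cast hN
  have a2 : (1:ℝ) ≤ N₁ := by exact_mod_cast hN₁
  have hpos : 0 ≤ ((N:ℝ) * N₁) ^ (1 + ε) := by positivity
  rcases le_total N N₁ with hle | hle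
  · have := count_gen (TS N N₁ N₂ m n₃) (fun t => t.1) (fun t => t.2.1)
      (by
        rintro ⟨n, n1, n2⟩ ⟨h1, -⟩ ⟨k, k1, k2⟩ ⟨h2, -⟩ e1 e2
        dsimp only at *
        subst e1 e2
        rw [h1] at h2
        have : n2 = k2 := by simpa using h2
        rw [this]) ((bx N).erase n₃)
      (fun a => (bx N₁).filter (fun x => 2 * ((a.1 - x.1) * (a.1 - n₃.1) + (a.2 - x.2) * (a.2 - n₃.2)) = m))
      (fun t ht => Finset.mem_erase.2 ⟨ht.2.2.1, ht.2.2.2.2.1⟩)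
      (fun t ht => Finset.mem_filter.2 ⟨ht.2.2.2.2.2.1, phi_eq _ _ _ _ _ ht.1 ht.2.2.2.1⟩)
      (fun a => 1 + 2 * (N₁:ℝ) / hh (a - n₃))
      (fun a ha => line_count _ (sub_ne_zero.2 (Finset.mem_erase.1 ha).1) _ _
        (fun x hx => (Finset.mem_filter.1 hx).1)
        (fun x hx y hy => by
          have e1 := (Finset.mem_filter.1 hx).2
          have e2 := (Finset.mem_filter.1 hy).2
          simp only [Prod.fst_sub, Prod.snd_sub]
          linarith))
    refine this.trans ((h' N N₁ hN hle n₃).trans ?_)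
    nlinarith
  · refine (h N N₁ N₂ hN hN₁ m n₃).trans ?_
    have b1 : (N₁:ℝ) ≤ N := by exact_mod_cast hle
    have b2 : (N:ℝ) ^ ε ≤ ((N:ℝ) * N₁) ^ ε := by
      apply Real.rpow_le_rpow (by positivity) _ hε.le
      nlinarith
    have b3 : (N₁:ℝ)^2 * (N:ℝ) ^ ε ≤ ((N:ℝ) * N₁) ^ (1 + ε) := by
      rw [Real.rpow_add (by positivity), Real.rpow_one]
      apply mul_le_mul _ b2 (by positivity) (by positivity)
      nlinarith
    nlinarith

theorem boundC (ε : ℝ) (hε : 0 < ε) : ∃ C : ℝ, 1 ≤ C ∧ ∀ N N₁ N₂ : ℕ, 1 ≤ N → 1 ≤ N₂ →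
    ∀ m n₃, ((TS N N₁ N₂ m n₃).ncard : ℝ) ≤ C * ((N:ℝ) * N₂) ^ (1 + ε) := by
  obtain ⟨C', hC', h'⟩ := line_sum ε hε
  have key : ∀ N N₁ N₂ : ℕ, 1 ≤ N → N ≤ N₂ →
    ∀ m n₃, ((TS N N₁ N₂ m n₃).ncard : ℝ) ≤ C' * ((N:ℝ) * N₂) ^ (1 + ε) := by
    intro N N₁ N₂ hN hle m n₃
    have := count_gen (TS N N₁ N₂ m n₃) (fun t => t.1) (fun t => t.2.2)
      (by
        rintro ⟨n, n1, n2⟩ ⟨h1, -⟩ ⟨k, k1, k2⟩ ⟨h2, -⟩ e1 e2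
        dsimp only at *
        subst e1 e2
        rw [h1] at h2
        have : n1 = k1 := by simpa using h2
        rw [this]) ((bx N).erase n₃)
      (fun a => (bx N₂).filter (fun x => 2 * ((n₃.1 - x.1) * (a.1 - n₃.1) + (n₃.2 - x.2) * (a.2 - n₃.2)) = m))
      (fun t ht => Finset.mem_erase.2 ⟨ht.2.2.1, ht.2.2.2.2.1⟩)
      (fun t ht => Finset.mem_filter.2 ⟨ht.2.2.2.2.2.2, by
        have e := phi_eq _ _ _ _ _ ht.1 ht.2.2.2.1
        have h1 : t.1.1 = t.2.1.1 - t.2.2.1 + n₃.1 := congrArg Prod.fst ht.1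
        have h2 : t.1.2 = t.2.1.2 - t.2.2.2 + n₃.2 := congrArg Prod.snd ht.1
        rw [← e]
        have g1 : n₃.1 - t.2.2.1 = t.1.1 - t.2.1.1 := by linarith
        have g2 : n₃.2 - t.2.2.2 = t.1.2 - t.2.1.2 := by linarith
        rw [g1, g2]⟩)
      (fun a => 1 + 2 * (N₂:ℝ) / hh (a - n₃))
      (fun a ha => line_count _ (sub_ne_zero.2 (Finset.mem_erase.1 ha).1) _ _
        (fun x hx => (Finset.mem_filter.1 hx).1)
        (fun x hx y hy => by
          have e1 := (Finset.mem_filter.1 hx).2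
          have e2 := (Finset.mem_filter.1 hy).2
          simp only [Prod.fst_sub, Prod.snd_sub]
          linarith))
    exact this.trans (h' N N₂ hN hle n₃)
  refine ⟨C', hC', fun N N₁ N₂ hN hN₂ m n₃ => ?_⟩
  rcases le_total N N₂ with hle | hle
  · exact key N N₁ N₂ hN hle m n₃
  · have h1 : ((TS N N₁ N₂ m n₃).ncard : ℝ) ≤ (TS N₂ N₁ N m n₃).ncard := by
      exact_mod_cast TS_symm N N₁ N₂ m n₃
    rw [mul_comm (N:ℝ)]
    exact h1.trans (key N₂ N₁ N hN₂ hle m n₃)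

theorem sim_bx (k : ℕ) (n : ℤ × ℤ) (h : simDyadic ((2:ℝ) ^ k) n) : n ∈ bx (2 ^ k) := by
  have h1 : znorm n ≤ 2 ^ k := by
    rcases h with ⟨h1, h2⟩ | ⟨-, -, h2⟩
    · rw [h1]; exact h2
    · exact h2
  have h2 : (n.1:ℝ)^2 + (n.2:ℝ)^2 ≤ (2^k)^2 := by
    unfold znorm at h1
    exact (Real.sqrt_le_left (by positivity)).1 h1
  rw [mem_bx]
  have a1 : |(n.1:ℝ)| ≤ 2 ^ k := abs_le_of_sq_le_sq (by nlinarith [sq_nonneg (n.2:ℝ)]) (by positivity)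
  have a2 : |(n.2:ℝ)| ≤ 2 ^ k := abs_le_of_sq_le_sq (by nlinarith [sq_nonneg (n.1:ℝ)]) (by positivity)
  exact ⟨by exact_mod_cast a1, by exact_mod_cast a2⟩

theorem stmt8 (ε : ℝ) (hε : 0 < ε) :
    ∃ C : ℝ, 0 < C ∧ ∀ N N₁ N₂ N₃ : ℝ,
      IsDyadic N → IsDyadic N₁ → IsDyadic N₂ → IsDyadic N₃ → ∀ m : ℤ, ∀ n₃ : ℤ × ℤ,
      (({t : (ℤ × ℤ) × (ℤ × ℤ) × (ℤ × ℤ) |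
          SMem N N₁ N₂ N₃ m t.1 t.2.1 t.2.2 n₃}).ncard : ℝ) ≤
        C * min (min (N₁ ^ 2 * (min N N₂) ^ ε) ((N * N₁) ^ (1 + ε)))
                (min ((N * N₂) ^ (1 + ε)) ((N₁ * N₂) ^ (1 + ε))) := by
  obtain ⟨A, hA, hA'⟩ := boundA ε hε
  obtain ⟨B, hB, hB'⟩ := boundB ε hε
  obtain ⟨C, hC, hC'⟩ := boundC ε hε
  refine ⟨A + B + C, by linarith, ?_⟩
  rintro N N₁ N₂ N₃ ⟨k, rfl⟩ ⟨k₁, rfl⟩ ⟨k₂, rfl⟩ - m n₃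
  have hsub : ({t : (ℤ × ℤ) × (ℤ × ℤ) × (ℤ × ℤ) |
      SMem (2^k) (2^k₁) (2^k₂) N₃ m t.1 t.2.1 t.2.2 n₃}) ⊆ TS (2^k) (2^k₁) (2^k₂) m n₃ := by
    rintro t ⟨h1, h2, h3, h4, h5, h6, h7, -⟩
    exact ⟨h1, h2, h3, h4, sim_bx _ _ h5, sim_bx _ _ h6, sim_bx _ _ h7⟩
  have h0 : (({t : (ℤ × ℤ) × (ℤ × ℤ) × (ℤ × ℤ) |
      SMem (2^k) (2^k₁) (2^k₂) N₃ m t.1 t.2.1 t.2.2 n₃}).ncard : ℝ) ≤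
      ((TS (2^k) (2^k₁) (2^k₂) m n₃).ncard : ℝ) := by
    exact_mod_cast Set.ncard_le_ncard hsub (TS_fin _ _ _ _ _)
  have hs : ((TS (2^k) (2^k₁) (2^k₂) m n₃).ncard : ℝ) ≤ (TS (2^k₂) (2^k₁) (2^k) m n₃).ncard := by
    exact_mod_cast TS_symm _ _ _ m n₃
  have p0 : 1 ≤ 2 ^ k := Nat.one_le_two_pow
  have p1 : 1 ≤ 2 ^ k₁ := Nat.one_le_two_pow
  have p2 : 1 ≤ 2 ^ k₂ := Nat.one_le_two_pow
  have a1 := hA' (2^k) (2^k₁) (2^k₂) p0 p1 m n₃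
  have a2 := hA' (2^k₂) (2^k₁) (2^k) p2 p1 m n₃
  have b1 := hB' (2^k) (2^k₁) (2^k₂) p0 p1 m n₃
  have b2 := hB' (2^k₂) (2^k₁) (2^k) p2 p1 m n₃
  have c1 := hC' (2^k) (2^k₁) (2^k₂) p0 p2 m n₃
  push_cast at a1 a2 b1 b2 c1
  have up : ∀ D X T : ℝ, 0 ≤ X → D ≤ A + B + C → T ≤ D * X → T ≤ (A + B + C) * X := by
    intro D X T hX hD hT
    exact hT.trans (mul_le_mul_of_nonneg_right hD hX)
  refine h0.trans ?_
  have e1 : ((TS (2^k) (2^k₁) (2^k₂) m n₃).ncard : ℝ) ≤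
      (A + B + C) * (((2:ℝ)^k₁) ^ 2 * (min ((2:ℝ)^k) (2^k₂)) ^ ε) := by
    rcases min_choice ((2:ℝ)^k) (2^k₂) with h | h
    · rw [h]; exact up A _ _ (by positivity) (by linarith) a1
    · rw [h]; exact up A _ _ (by positivity) (by linarith) (hs.trans a2)
  have e2 := up B _ _ (by positivity) (by linarith) b1
  have e3 := up C _ _ (by positivity) (by linarith) c1
  have e4 := up B _ _ (by positivity) (by linarith) (hs.trans b2)
  rw [mul_comm ((2:ℝ)^k₂)] at e4
  rw [mul_min_of_nonneg _ _ (by linarith), mul_min_of_nonneg _ _ (by linarith),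
    mul_min_of_nonneg _ _ (by linarith)]
  exact le_min (le_min e1 e2) (le_min e3 e4)
end
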